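/- arXiv:0902.3345 — 10 statements merged into one kernel-verified Lean document; each statement's English description precedes it below -/
import Mathlib

section
/- Every face of a rigidly convex set is exposed: if S ⊆ ℝ^n is rigidly convex, then every face of S is an exposed face of S. -/
open MvPolynomial

/-- A face of a convex set `S ⊆ ℝⁿ`: a nonempty convex subset `F ⊆ S` such that whenever
`x, y ∈ S`, `λ ∈ (0,1)` and `λx + (1-λ)y ∈ F`, then `x, y ∈ F`. -/
def IsFaceOf {n : ℕ} (S F : Set (Fin n → ℝ)) : Prop :=
  F.Nonempty ∧ Convex ℝ F ∧ F ⊆ S ∧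
    ∀ x ∈ S, ∀ y ∈ S, ∀ l : ℝ, 0 < l → l < 1 →
      l • x + (1 - l) • y ∈ F → x ∈ F ∧ y ∈ F

/-- The affine-linear function `x ↦ c + a·x` on `ℝⁿ`. -/
def affEval {n : ℕ} (a : Fin n → ℝ) (c : ℝ) (x : Fin n → ℝ) : ℝ :=
  c + ∑ i, a i * x i

/-- `F` is an exposed face of `S`: either `F = S` or there is a nonzero affine-linear
function `ℓ` with `ℓ ≥ 0` on `S`, `{ℓ = 0} ∩ S ≠ ∅` and `{ℓ = 0} ∩ S = F`. -/
def IsExposedFaceOf {n : ℕ} (S F : Set (Fin n → ℝ)) : Prop :=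
  F = S ∨ ∃ (a : Fin n → ℝ) (c : ℝ), affEval a c ≠ 0 ∧
    (∀ x ∈ S, 0 ≤ affEval a c x) ∧
    ({x | affEval a c x = 0} ∩ S).Nonempty ∧
    {x | affEval a c x = 0} ∩ S = F

/-- The univariate polynomial `s ↦ p(e + s·v)`. -/
noncomputable def lineEvalAdd {n : ℕ} (p : MvPolynomial (Fin n) ℝ) (e v : Fin n → ℝ) :
    Polynomial ℝ :=
  MvPolynomial.aeval (fun i => Polynomial.C (e i) + Polynomial.C (v i) * Polynomial.X) p

/-- `p` is a real zero polynomial with respect to `e` (an RZ_e-polynomial): `p(e) > 0` and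
for every `v ≠ 0` all complex zeros of `s ↦ p(e + s·v)` are real. -/
def IsRZ {n : ℕ} (p : MvPolynomial (Fin n) ℝ) (e : Fin n → ℝ) : Prop :=
  0 < eval e p ∧
    ∀ v : Fin n → ℝ, v ≠ 0 → ∀ z : ℂ,
      Polynomial.aeval z (lineEvalAdd p e v) = 0 → z.im = 0

/-- `S ⊆ ℝⁿ` is rigidly convex: there are `e ∈ S` and an RZ_e-polynomial `p` such that `S`
is the closure of the connected component of `{p > 0}` containing `e`. -/
def RigidlyConvex {n : ℕ} (S : Set (Fin n → ℝ)) : Prop :=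
  ∃ (e : Fin n → ℝ) (p : MvPolynomial (Fin n) ℝ), e ∈ S ∧ IsRZ p e ∧
    S = closure (connectedComponentIn {x | 0 < eval x p} e)


/-- Homogenization, existence form. -/
lemma exists_homog {n : ℕ} (p : MvPolynomial (Fin n) ℝ) :
    ∃ (d : ℕ) (H : MvPolynomial (Option (Fin n)) ℝ), ∀ (r : ℂ) (x : Fin n → ℂ), r ≠ 0 →
      aeval (fun o : Option (Fin n) => o.elim r x) H = r ^ d * aeval (fun i => x i / r) p := by
  induction p using MvPolynomial.induction_on with
  | C a => exact ⟨0, C a, fun r x hr => by simp⟩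
  | add p q hp hq =>
    obtain ⟨d1, H1, h1⟩ := hp
    obtain ⟨d2, H2, h2⟩ := hq
    refine ⟨d1 + d2, X none ^ d2 * H1 + X none ^ d1 * H2, fun r x hr => ?_⟩
    simp only [map_add, map_mul, map_pow, aeval_X, Option.elim_none, h1 r x hr, h2 r x hr]
    ring
  | mul_X p i hp =>
    obtain ⟨d1, H1, h1⟩ := hp
    refine ⟨d1 + 1, H1 * X (some i), fun r x hr => ?_⟩
    simp only [map_mul, aeval_X, Option.elim_some, h1 r x hr]
    field_simp
    ring

lemma exists_degree_bound {σ : Type*} (H : MvPolynomial σ ℝ) :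
    ∃ D : ℕ, ∀ f : σ → Polynomial ℂ, (∀ o, (f o).natDegree ≤ 1) →
      (aeval f H).natDegree ≤ D := by
  induction H using MvPolynomial.induction_on with
  | C a =>
    refine ⟨0, fun f _ => ?_⟩
    rw [MvPolynomial.aeval_C, IsScalarTower.algebraMap_apply ℝ ℂ (Polynomial ℂ)]
    simp
  | add p q hp hq =>
    obtain ⟨D1, h1⟩ := hp
    obtain ⟨D2, h2⟩ := hq
    refine ⟨max D1 D2, fun f hf => ?_⟩
    rw [map_add]
    exact (Polynomial.natDegree_add_le _ _).trans (max_le_max (h1 f hf) (h2 f hf))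
  | mul_X p i hp =>
    obtain ⟨D1, h1⟩ := hp
    refine ⟨D1 + 1, fun f hf => ?_⟩
    rw [map_mul, aeval_X]
    exact Polynomial.natDegree_mul_le.trans (add_le_add (h1 f hf) (hf i))

lemma poly_lower_bound (g : Polynomial ℂ) (D : ℕ) (hD : g.natDegree ≤ D) (y : ℂ) (c : ℝ)
    (hc : 0 < c) (hc1 : c ≤ 1) (h0 : g.eval 0 ≠ 0)
    (hroot : ∀ r, g.eval r = 0 → c ≤ ‖1 - y / r‖) :
    ‖g.eval 0‖ * c ^ D ≤ ‖g.eval y‖ := by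
  have hs : g.Splits := IsAlgClosed.splits g
  have key : ∀ m : Multiset ℂ, (∀ r ∈ m, r ≠ 0 ∧ c ≤ ‖1 - y / r‖) →
      ‖(m.map (fun a => 0 - a)).prod‖ * c ^ m.card ≤ ‖(m.map (fun a => y - a)).prod‖ := by
    intro m
    induction m using Multiset.induction_on with
    | empty => simp
    | cons a m ih =>
      intro h
      have h1 := ih (fun r hr => h r (Multiset.mem_cons_of_mem hr))
      obtain ⟨ha, hb⟩ := h a (Multiset.mem_cons_self a m)
      have h2 : ‖(0:ℂ) - a‖ * c ≤ ‖y - a‖ := by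
        have : y - a = (0 - a) * (1 - y / a) := by field_simp; ring
        rw [this, norm_mul]
        gcongr
      simp only [Multiset.map_cons, Multiset.prod_cons, Multiset.card_cons, norm_mul]
      calc _ = (‖(0:ℂ) - a‖ * c) * (‖(m.map (fun a => 0 - a)).prod‖ * c ^ m.card) := by ring
        _ ≤ _ := by gcongr
  have hg0 : g ≠ 0 := by rintro rfl; simp at h0
  have k := key g.roots (fun r hr => by
    have hr' : g.eval r = 0 := (Polynomial.mem_roots hg0).1 hr
    refine ⟨?_, hroot r hr'⟩
    rintro rfl; exact h0 hr')
  rw [hs.eval_eq_prod_roots, hs.eval_eq_prod_roots, norm_mul, norm_mul, mul_assoc]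
  gcongr
  refine le_trans ?_ k
  refine mul_le_mul_of_nonneg_left ?_ (norm_nonneg _)
  exact pow_le_pow_of_le_one hc.le hc1 ((Polynomial.card_roots' g).trans hD)

/-- functional form of the RZ property -/
def RZf {n : ℕ} (p : MvPolynomial (Fin n) ℝ) (e : Fin n → ℝ) : Prop :=
  0 < eval e p ∧ ∀ (v : Fin n → ℝ) (z : ℂ),
    aeval (fun i => (e i : ℂ) + z * (v i : ℂ)) p = 0 → z.im = 0

lemma aeval_ofReal {n : ℕ} (p : MvPolynomial (Fin n) ℝ) (x : Fin n → ℝ) :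
    aeval (fun i => (x i : ℂ)) p = ((eval x p : ℝ) : ℂ) := by
  have := MvPolynomial.aeval_algebraMap_apply (A := ℝ) (B := ℂ) x p
  simpa [MvPolynomial.aeval_eq_eval, Function.comp_def] using this

lemma lineEval_aeval {n : ℕ} (p : MvPolynomial (Fin n) ℝ) (e v : Fin n → ℝ) (z : ℂ) :
    Polynomial.aeval z (lineEvalAdd p e v) = aeval (fun i => (e i : ℂ) + z * (v i : ℂ)) p := by
  unfold lineEvalAdd
  rw [← AlgHom.comp_apply, MvPolynomial.comp_aeval]
  congr 2
  funext i
  simp only [map_add, map_mul, Polynomial.aeval_C, Polynomial.aeval_X, Complex.coe_algebraMap]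
  ring

lemma lineEval_eval {n : ℕ} (p : MvPolynomial (Fin n) ℝ) (e v : Fin n → ℝ) (t : ℝ) :
    Polynomial.eval t (lineEvalAdd p e v) = eval (e + t • v) p := by
  unfold lineEvalAdd
  rw [← Polynomial.coe_aeval_eq_eval, ← AlgHom.comp_apply, MvPolynomial.comp_aeval,
    ← MvPolynomial.aeval_eq_eval]
  congr 2
  funext i
  simp only [map_add, map_mul, Polynomial.aeval_C, Polynomial.aeval_X, Pi.add_apply, Pi.smul_apply, smul_eq_mul, Complex.coe_algebraMap, Algebra.algebraMap_self, RingHom.id_apply]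
  ring

lemma IsRZ.rzf {n : ℕ} {p : MvPolynomial (Fin n) ℝ} {e : Fin n → ℝ} (h : IsRZ p e) :
    RZf p e := by
  refine ⟨h.1, fun v z hz => ?_⟩
  by_cases hv : v = 0
  · subst hv
    simp only [Pi.zero_apply, Complex.ofReal_zero, mul_zero, add_zero, aeval_ofReal] at hz
    exact absurd (Complex.ofReal_eq_zero.1 hz) h.1.ne'
  · exact h.2 v hv z (by rwa [lineEval_aeval])

lemma continuous_aevalC {τ : Type*} (p : MvPolynomial τ ℝ) :
    Continuous (fun x : τ → ℂ => aeval x p) := by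
  have : (fun x : τ → ℂ => aeval x p) = fun x => eval x (map (algebraMap ℝ ℂ) p) := by
    funext x; rw [MvPolynomial.eval_map, aeval_def]
  rw [this]
  exact MvPolynomial.continuous_eval _

lemma rz_move {n : ℕ} {p : MvPolynomial (Fin n) ℝ} {e a : Fin n → ℝ} (h : RZf p e)
    (ha : ∀ t : ℝ, 0 ≤ t → t ≤ 1 → 0 < eval (e + t • (a - e)) p) : RZf p a := by
  have hpa : 0 < eval a p := by simpa using ha 1 zero_le_one le_rfl
  refine ⟨hpa, ?_⟩
  intro w
  obtain ⟨b, hb⟩ : ∃ b : Fin n → ℝ, b = a - e := ⟨_, rfl⟩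
  obtain ⟨q, hq⟩ : ∃ q : MvPolynomial (Fin n) ℝ, ∀ x : Fin n → ℂ,
      aeval x q = aeval (fun i => (e i : ℂ) + x i) p := by
    refine ⟨aeval (fun i => C (e i) + X i) p, fun x => ?_⟩
    rw [← AlgHom.comp_apply, MvPolynomial.comp_aeval]
    congr 2
    funext i
    simp
  obtain ⟨d, H, hH⟩ := exists_homog q
  obtain ⟨D, hD⟩ := exists_degree_bound H
  obtain ⟨Θ, hΘ⟩ : ∃ Θ : ℂ → (Fin n → ℂ) → ℂ, Θ =
    fun r x => aeval (fun o : Option (Fin n) => o.elim r x) H := ⟨_, rfl⟩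
  have hΘc : Continuous (fun rx : ℂ × (Fin n → ℂ) => Θ rx.1 rx.2) := by
    rw [hΘ]
    refine (continuous_aevalC H).comp ?_
    refine continuous_pi fun o => ?_
    cases o with
    | none => exact continuous_fst
    | some i => exact (continuous_apply i).comp continuous_snd
  have hΘh : ∀ r x, r ≠ 0 → Θ r x = r ^ d * aeval (fun i => (e i : ℂ) + x i / r) p := by
    intro r x hr
    rw [hΘ]
    simp only [hH r x hr, hq]
  have hscale : ∀ c r x, c ≠ 0 → r ≠ 0 → Θ (c * r) (fun i => c * x i) = c ^ d * Θ r x := by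
    intro c r x hc hr
    rw [hΘh _ _ (mul_ne_zero hc hr), hΘh _ _ hr, mul_pow, mul_assoc]
    congr 3
    congr 1
    funext i
    rw [mul_div_mul_left _ _ hc]
  -- the polynomial in y
  obtain ⟨G, hG⟩ : ∃ G : ℝ → ℝ → Polynomial ℂ, ∀ δ σ, (G δ σ).natDegree ≤ D ∧
      ∀ y, (G δ σ).eval y = Θ (1 + Complex.I * δ * y) (fun i => b i + σ * w i * y) := by
    refine ⟨fun δ σ => aeval (fun o : Option (Fin n) => o.elim
      (1 + Polynomial.C (Complex.I * δ) * Polynomial.X)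
      (fun i => Polynomial.C (b i : ℂ) + Polynomial.C (σ * w i : ℂ) * Polynomial.X)) H,
      fun δ σ => ⟨hD _ ?_, fun y => ?_⟩⟩
    · rintro (_ | i)
      · simp only [Option.elim_none]
        rw [← Polynomial.C_1, add_comm]
        exact Polynomial.natDegree_linear_le
      · simp only [Option.elim_some]
        rw [add_comm]
        exact Polynomial.natDegree_linear_le
    · rw [hΘ, ← Polynomial.coe_evalRingHom, ← Polynomial.coe_aeval_eq_evalRingHom]
      have : ∀ P : Polynomial ℂ, ((Polynomial.aeval y : Polynomial ℂ →ₐ[ℂ] ℂ) : Polynomial ℂ →+* ℂ) P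
        = ((Polynomial.aeval y : Polynomial ℂ →ₐ[ℂ] ℂ).restrictScalars ℝ) P := fun P => rfl
      rw [this, ← AlgHom.comp_apply, MvPolynomial.comp_aeval]
      simp only
      congr 2
      funext o
      cases o <;> simp
  have hG0 : ∀ δ σ, (G δ σ).eval 0 = (eval a p : ℝ) := by
    intro δ σ
    rw [(hG δ σ).2, hΘh _ _ (by simp), ← aeval_ofReal]
    simp [hb]
  have hGz : ∀ (δ σ : ℝ) (z : ℂ), z ≠ 0 → z + Complex.I * δ ≠ 0 →
      Θ (z + Complex.I * δ) (fun i => z * b i + σ * w i) = z ^ d * (G δ σ).eval (1 / z) := by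
    intro δ σ z hz hzd
    rw [(hG δ σ).2, ← hscale z _ _ hz]
    · congr 1
      · field_simp
      · funext i; field_simp
    · have : 1 + Complex.I * δ * (1 / z) = (z + Complex.I * δ) / z := by field_simp
      rw [this]
      exact div_ne_zero hzd hz
  have hup : ∀ (δ : ℝ) (z : ℂ), 0 < δ → 0 ≤ z.im → z + Complex.I * δ ≠ 0 := by
    intro δ z hδ hz h0
    have := congrArg Complex.im h0
    simp at this
    linarith
  -- key bound
  have hbound : ∀ δ σ : ℝ, 0 < δ →
      (∀ z : ℂ, 0 ≤ z.im → Θ (z + Complex.I * δ) (fun i => z * b i + σ * w i) ≠ 0) →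
      ∀ z : ℂ, 0 < z.im → eval a p * (z.im / ‖z‖) ^ D ≤ ‖(G δ σ).eval (1 / z)‖ := by
    intro δ σ hδ hA z hz
    have hz0 : z ≠ 0 := by rintro rfl; simp at hz
    have hn : 0 < ‖z‖ := norm_pos_iff.2 hz0
    have := poly_lower_bound (G δ σ) D (hG δ σ).1 (1 / z) (z.im / ‖z‖) (by positivity)
      ((div_le_one hn).2 ((le_abs_self _).trans (Complex.abs_im_le_norm z)))
      (by rw [hG0]; exact_mod_cast hpa.ne') ?_
    · rw [hG0] at this
      rw [Complex.norm_real, Real.norm_eq_abs, abs_of_pos hpa] at this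
      exact this
    · intro r hr
      have hr0 : r ≠ 0 := by
        rintro rfl
        rw [hG0] at hr
        exact hpa.ne' (by exact_mod_cast hr)
      have hζ : (1 / r).im < 0 := by
        by_contra hcon
        push Not at hcon
        apply hA (1 / r) hcon
        rw [hGz _ _ _ (one_div_ne_zero hr0) (hup _ _ hδ hcon), one_div_one_div, hr, mul_zero]
      have e1 : 1 - 1 / z / r = (z - 1 / r) / z := by field_simp
      rw [e1, norm_div]
      gcongr
      calc z.im ≤ (z - 1 / r).im := by rw [Complex.sub_im]; linarith
        _ ≤ _ := (le_abs_self _).trans (Complex.abs_im_le_norm _)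
  -- nonvanishing for real x, nonreal r
  have hreal : ∀ (r : ℂ) (x : Fin n → ℝ), r.im ≠ 0 → Θ r (fun i => x i) ≠ 0 := by
    intro r x hr h0
    have hr0 : r ≠ 0 := by rintro rfl; simp at hr
    rw [hΘh _ _ hr0] at h0
    have h1 := (mul_eq_zero.1 h0).resolve_left (pow_ne_zero _ hr0)
    have h2 := h.2 x (1 / r) (by rw [← h1]; congr 2; funext i; ring)
    rw [one_div, Complex.inv_im] at h2
    rcases div_eq_zero_iff.1 h2 with h3 | h3
    · exact hr (by linarith)
    · exact hr0 (Complex.normSq_eq_zero.1 h3)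
  have hA : ∀ δ : ℝ, 0 < δ → ∀ σ : ℝ, ∀ z : ℂ, 0 ≤ z.im →
      Θ (z + Complex.I * δ) (fun i => z * b i + σ * w i) ≠ 0 := by
    intro δ hδ
    obtain ⟨A, hAdef⟩ : ∃ A : Set ℝ, A = {σ : ℝ | ∀ z : ℂ, 0 ≤ z.im →
      Θ (z + Complex.I * δ) (fun i => z * b i + σ * w i) ≠ 0} := ⟨_, rfl⟩
    have hopen : IsOpen A := by
      rw [isOpen_iff_mem_nhds]
      intro σ hσ
      rw [hAdef] at hσ
      have hc1 : Continuous (fun sy : ℝ × ℂ =>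
          Θ (1 + Complex.I * δ * sy.2) (fun i => b i + sy.1 * w i * sy.2)) := by
        refine hΘc.comp (Continuous.prodMk (by fun_prop) (by fun_prop))
      have hc2 : Continuous (fun sz : ℝ × ℂ =>
          Θ (sz.2 + Complex.I * δ) (fun i => sz.2 * b i + sz.1 * w i)) := by
        refine hΘc.comp (Continuous.prodMk (by fun_prop) (by fun_prop))
      have h1 : ∀ᶠ sy in nhds (σ, (0:ℂ)),
          Θ (1 + Complex.I * δ * sy.2) (fun i => b i + sy.1 * w i * sy.2) ≠ 0 := by
        refine hc1.continuousAt.eventually_ne ?_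
        have := hG0 δ σ
        rw [(hG δ σ).2] at this
        simp only
        rw [this]
        exact_mod_cast hpa.ne'
      rw [nhds_prod_eq, Filter.eventually_prod_iff] at h1
      obtain ⟨P1, hP1, P2, hP2, hP⟩ := h1
      obtain ⟨ε, hε, hball⟩ := Metric.eventually_nhds_iff.1 hP2
      have hK : IsCompact (Metric.closedBall (0:ℂ) (1/ε + 1) ∩ {z : ℂ | 0 ≤ z.im}) :=
        (isCompact_closedBall _ _).inter_right (isClosed_le continuous_const Complex.continuous_im)
      have h2 : ∀ᶠ s : ℝ in nhds σ, ∀ z ∈ Metric.closedBall (0:ℂ) (1/ε + 1) ∩ {z : ℂ | 0 ≤ z.im},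
          Θ (z + Complex.I * δ) (fun i => z * b i + (s : ℂ) * w i) ≠ 0 := by
        refine hK.eventually_forall_of_forall_eventually fun z hz => ?_
        exact (hc2.continuousAt (x := (σ, z))).eventually_ne (hσ z hz.2)
      filter_upwards [h2, hP1] with s hs2 hs1
      rw [hAdef]
      intro z hz
      by_cases hzK : ‖z‖ ≤ 1/ε + 1
      · exact hs2 z ⟨by simpa using hzK, hz⟩
      · push Not at hzK
        have hzpos : 0 < ‖z‖ := lt_trans (by positivity) hzK
        have hz0 : z ≠ 0 := norm_pos_iff.1 hzpos
        rw [hGz _ _ _ hz0 (hup _ _ hδ hz)]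
        refine mul_ne_zero (pow_ne_zero _ hz0) ?_
        rw [(hG δ s).2]
        refine hP hs1 (hball ?_)
        rw [dist_zero_right, norm_div, norm_one, div_lt_iff₀ hzpos]
        have : 1/ε < ‖z‖ := by linarith
        rw [div_lt_iff₀ hε] at this
        linarith
    have hclosed : IsClosed A := by
      rw [← isSeqClosed_iff_isClosed]
      intro sk σ hsk hlim
      rw [hAdef]
      intro z hz
      rcases hz.eq_or_lt with hz | hz
      · have hzr : z = (z.re : ℂ) := by apply Complex.ext <;> simp [← hz]
        have := hreal (z + Complex.I * δ) (fun i => z.re * b i + σ * w i)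
          (by simp [← hz, hδ.ne'])
        convert this using 2
        funext i
        push_cast
        rw [← hzr]
      · have hz0 : z ≠ 0 := by rintro rfl; simp at hz
        rw [hGz _ _ _ hz0 (hup _ _ hδ hz.le)]
        refine mul_ne_zero (pow_ne_zero _ hz0) ?_
        have hc : Continuous (fun s : ℝ => ‖(G δ s).eval (1 / z)‖) := by
          have : (fun s : ℝ => ‖(G δ s).eval (1 / z)‖) = fun s : ℝ =>
            ‖Θ (1 + Complex.I * δ * (1 / z)) (fun i => b i + s * w i * (1 / z))‖ := by
            funext s; rw [(hG δ s).2]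
          rw [this]
          exact (hΘc.comp (Continuous.prodMk (by fun_prop) (by fun_prop))).norm
        have hle : eval a p * (z.im / ‖z‖) ^ D ≤ ‖(G δ σ).eval (1 / z)‖ := by
          refine ge_of_tendsto' ((hc.tendsto σ).comp hlim) fun k => ?_
          have := hsk k
          rw [hAdef] at this
          exact hbound δ (sk k) hδ this z hz
        have hn : 0 < ‖z‖ := norm_pos_iff.2 hz0
        have : 0 < eval a p * (z.im / ‖z‖) ^ D := by positivity
        exact norm_pos_iff.1 (this.trans_le hle)
    have h0 : (0:ℝ) ∈ A := by
      rw [hAdef]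
      intro z hz h0
      have hr0 := hup δ z hδ hz
      rw [hΘh _ _ hr0] at h0
      have h1 := (mul_eq_zero.1 h0).resolve_left (pow_ne_zero _ hr0)
      obtain ⟨ρ, hρ⟩ : ∃ ρ : ℂ, ρ = z / (z + Complex.I * δ) := ⟨_, rfl⟩
      have h2 : aeval (fun i => (e i : ℂ) + ρ * (b i : ℂ)) p = 0 := by
        rw [← h1, hρ]; congr 2; funext i; push_cast; ring
      have h3 := h.2 b ρ h2
      have hρr : ρ = (ρ.re : ℂ) := by apply Complex.ext <;> simp [h3]
      rw [hρr] at h2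
      have h4 : eval (e + ρ.re • (a - e)) p = 0 := by
        have : ((eval (e + ρ.re • (a - e)) p : ℝ) : ℂ) = 0 := by
          rw [← aeval_ofReal, ← h2]; congr 2; funext i; simp [hb]
        exact_mod_cast this
      have h5 : z = ρ.re * (z + Complex.I * δ) := by
        rw [← hρr, hρ]; field_simp
      have h6 := congrArg Complex.im h5
      simp at h6
      rcases lt_or_ge ρ.re 0 with hneg | hpos
      · nlinarith
      · rcases le_or_gt ρ.re 1 with hle | hgt
        · exact (ha ρ.re hpos hle).ne' h4
        · nlinarith
    have huniv : A = Set.univ := IsClopen.eq_univ ⟨hclosed, hopen⟩ ⟨0, h0⟩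
    intro σ
    have : σ ∈ A := huniv ▸ Set.mem_univ σ
    rw [hAdef] at this
    exact this
  -- limit δ → 0
  have hlimit : ∀ σ : ℝ, ∀ z : ℂ, 0 < z.im → (G 0 σ).eval (1 / z) ≠ 0 := by
    intro σ z hz
    have hz0 : z ≠ 0 := by rintro rfl; simp at hz
    have hc : Continuous (fun s : ℝ => ‖(G s σ).eval (1 / z)‖) := by
      have : (fun s : ℝ => ‖(G s σ).eval (1 / z)‖) = fun s : ℝ =>
        ‖Θ (1 + Complex.I * s * (1 / z)) (fun i => b i + σ * w i * (1 / z))‖ := by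
        funext s; rw [(hG s σ).2]
      rw [this]
      exact (hΘc.comp (Continuous.prodMk (by fun_prop) (by fun_prop))).norm
    have hle : eval a p * (z.im / ‖z‖) ^ D ≤ ‖(G 0 σ).eval (1 / z)‖ := by
      refine ge_of_tendsto' ((hc.tendsto 0).comp tendsto_one_div_add_atTop_nhds_zero_nat) fun k => ?_
      exact hbound _ σ Nat.one_div_pos_of_nat (hA _ Nat.one_div_pos_of_nat σ) z hz
    have hn : 0 < ‖z‖ := norm_pos_iff.2 hz0
    have : 0 < eval a p * (z.im / ‖z‖) ^ D := by positivity
    exact norm_pos_iff.1 (this.trans_le hle)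
  intro s hs
  have hG0s : ∀ σ : ℝ, ∀ y, (G 0 σ).eval y = aeval (fun i => (a i : ℂ) + y * σ * w i) p := by
    intro σ y
    rw [(hG 0 σ).2, hΘh _ _ (by simp)]
    simp only [Complex.ofReal_zero, mul_zero, zero_mul, add_zero, one_pow, one_mul, div_one]
    congr 2
    funext i
    simp [hb]
    ring
  have hs0 : s ≠ 0 → Complex.normSq s > 0 := fun h => Complex.normSq_pos.2 h
  by_contra him
  have hsn : s ≠ 0 := by rintro rfl; simp at him
  rcases lt_or_gt_of_ne him with hlt | hgt
  · apply hlimit 1 (1 / s)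
    · rw [one_div, Complex.inv_im]
      exact div_pos (by linarith) (hs0 hsn)
    · rw [hG0s, one_div_one_div, ← hs]
      congr 2; funext i; simp
  · apply hlimit (-1) (-(1 / s))
    · rw [one_div, Complex.neg_im, Complex.inv_im, ← neg_div, neg_neg]
      exact div_pos (by linarith) (hs0 hsn)
    · rw [hG0s, ← hs]
      congr 2; funext i
      field_simp
      simp

lemma real_factor (g : Polynomial ℝ) (h0 : 0 < g.eval 0)
    (hr : ∀ z : ℂ, Polynomial.aeval z g = 0 → z.im = 0) :
    ∃ μ : Multiset ℝ, g = Polynomial.C (g.eval 0) *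
      (μ.map (fun m => 1 + Polynomial.C m * Polynomial.X)).prod := by
  have hg0 : g ≠ 0 := by rintro rfl; simp at h0
  have hs : g.Splits := by
    refine Polynomial.Splits.of_splits_map (algebraMap ℝ ℂ) (IsAlgClosed.splits _) ?_
    intro z hz
    have : Polynomial.aeval z g = 0 := by
      have := Polynomial.isRoot_of_mem_roots hz
      rwa [Polynomial.IsRoot.def, Polynomial.eval_map_algebraMap] at this
    exact ⟨z.re, by apply Complex.ext <;> simp [hr z this]⟩
  have key : ∀ m : Multiset ℝ, (∀ r ∈ m, r ≠ 0) → ∃ c : ℝ, ∃ μ : Multiset ℝ,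
      (m.map (fun a => Polynomial.X - Polynomial.C a)).prod = Polynomial.C c *
      (μ.map (fun m => 1 + Polynomial.C m * Polynomial.X)).prod := by
    intro m
    induction m using Multiset.induction_on with
    | empty => exact fun _ => ⟨1, 0, by simp⟩
    | cons a m ih =>
      intro h
      obtain ⟨c, μ, hc⟩ := ih (fun r hr => h r (Multiset.mem_cons_of_mem hr))
      have ha := h a (Multiset.mem_cons_self a m)
      refine ⟨-a * c, (-1/a) ::ₘ μ, ?_⟩
      simp only [Multiset.map_cons, Multiset.prod_cons, hc]
      have : (Polynomial.X : Polynomial ℝ) - Polynomial.C a =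
          Polynomial.C (-a) * (1 + Polynomial.C (-1/a) * Polynomial.X) := by
        rw [mul_add, ← mul_assoc, ← Polynomial.C_mul]
        have : -a * (-1 / a) = 1 := by field_simp
        rw [this]; simp; ring
      rw [this, Polynomial.C_mul]
      ring
  obtain ⟨c, μ, hc⟩ := key g.roots (by
    intro r hr' h
    subst h
    exact h0.ne' (Polynomial.isRoot_of_mem_roots hr'))
  have he := hs.eq_prod_roots
  rw [hc, ← mul_assoc, ← Polynomial.C_mul] at he
  have h1 : g.eval 0 = g.leadingCoeff * c := by
    conv_lhs => rw [he]
    rw [Polynomial.eval_mul, Polynomial.eval_C, Polynomial.eval_multiset_prod]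
    simp
  exact ⟨μ, by rw [h1]; exact he⟩

lemma prod_facts (μ : Multiset ℝ) :
    ((μ.map (fun m => 1 + Polynomial.C m * Polynomial.X)).prod : Polynomial ℝ).eval 0 = 1 ∧
    (((μ.map (fun m => 1 + Polynomial.C m * Polynomial.X)).prod : Polynomial ℝ).derivative).eval 0
      = μ.sum := by
  induction μ using Multiset.induction_on with
  | empty => simp
  | cons a m ih =>
    simp only [Multiset.map_cons, Multiset.prod_cons, Multiset.sum_cons, Polynomial.eval_mul,
      Polynomial.derivative_mul, Polynomial.eval_add, ih.1, ih.2]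
    simp

lemma prod_pos_tangent (μ : Multiset ℝ) (h : ∀ m ∈ μ, 0 < 1 + m) :
    ((μ.map (fun m => 1 + Polynomial.C m * Polynomial.X)).prod : Polynomial ℝ).eval 1
      ≤ Real.exp μ.sum ∧
    0 < ((μ.map (fun m => 1 + Polynomial.C m * Polynomial.X)).prod : Polynomial ℝ).eval 1 := by
  induction μ using Multiset.induction_on with
  | empty => simp
  | cons a m ih =>
    obtain ⟨i1, i2⟩ := ih (fun r hr => h r (Multiset.mem_cons_of_mem hr))
    have ha := h a (Multiset.mem_cons_self a m)
    simp only [Multiset.map_cons, Multiset.prod_cons, Multiset.sum_cons, Polynomial.eval_mul,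
      Polynomial.eval_add, Polynomial.eval_one, Polynomial.eval_C, Polynomial.eval_X, mul_one,
      Real.exp_add]
    refine ⟨mul_le_mul ?_ i1 i2.le (Real.exp_pos _).le, mul_pos ha i2⟩
    linarith [Real.add_one_le_exp a]

lemma prod_rpow (μ : Multiset ℝ) (h : ∀ m ∈ μ, 0 < 1 + m) (t : ℝ) (h0 : 0 ≤ t) (h1 : t ≤ 1) :
    (((μ.map (fun m => 1 + Polynomial.C m * Polynomial.X)).prod : Polynomial ℝ).eval 1) ^ t
      ≤ ((μ.map (fun m => 1 + Polynomial.C m * Polynomial.X)).prod : Polynomial ℝ).eval t := by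
  induction μ using Multiset.induction_on with
  | empty => simp
  | cons a m ih =>
    have hm := fun r hr => h r (Multiset.mem_cons_of_mem hr)
    have i1 := ih hm
    have i2 := (prod_pos_tangent m hm).2
    have ha := h a (Multiset.mem_cons_self a m)
    simp only [Multiset.map_cons, Multiset.prod_cons, Polynomial.eval_mul,
      Polynomial.eval_add, Polynomial.eval_one, Polynomial.eval_C, Polynomial.eval_X, mul_one]
    rw [Real.mul_rpow ha.le i2.le]
    have h3 := rpow_one_add_le_one_add_mul_self (s := a) (by linarith) h0 h1
    have h4 : 0 ≤ (1 + a) ^ t := Real.rpow_nonneg ha.le _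
    have h5 := Real.rpow_nonneg i2.le t
    refine mul_le_mul (by linarith) i1 h5 (by linarith)

lemma factor_pos (g : Polynomial ℝ) (hpos : ∀ t : ℝ, 0 ≤ t → t ≤ 1 → 0 < g.eval t)
    (μ : Multiset ℝ) (c : ℝ) (hg : g = Polynomial.C c *
      (μ.map (fun m => 1 + Polynomial.C m * Polynomial.X)).prod) : ∀ m ∈ μ, 0 < 1 + m := by
  intro m hm
  by_contra hcon
  push Not at hcon
  have hm1 : m ≤ -1 := by linarith
  have hm0 : m ≠ 0 := by linarith
  have := hpos (-1 / m) (div_nonneg_of_nonpos (by norm_num) (by linarith))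
    (by rw [div_le_one_of_neg (by linarith)]; linarith)
  rw [hg, Polynomial.eval_mul, Polynomial.eval_multiset_prod, Multiset.prod_eq_zero] at this
  · simp at this
  · rw [Multiset.map_map, Multiset.mem_map]
    refine ⟨m, hm, ?_⟩
    simp
    field_simp
    ring

lemma tangent (g : Polynomial ℝ) (hr : ∀ z : ℂ, Polynomial.aeval z g = 0 → z.im = 0)
    (hpos : ∀ t : ℝ, 0 ≤ t → t ≤ 1 → 0 < g.eval t) :
    g.eval 1 ≤ g.eval 0 * Real.exp (g.derivative.eval 0 / g.eval 0) := by
  have h0 := hpos 0 le_rfl zero_le_one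
  obtain ⟨μ, hμ⟩ := real_factor g h0 hr
  have hm := factor_pos g hpos μ _ hμ
  obtain ⟨i1, i2⟩ := prod_pos_tangent μ hm
  have hd : g.derivative.eval 0 = g.eval 0 * μ.sum := by
    conv_lhs => rw [hμ]
    rw [Polynomial.derivative_C_mul, Polynomial.eval_mul, Polynomial.eval_C, (prod_facts μ).2]
  have h1 : g.eval 1 = g.eval 0 *
      ((μ.map (fun m => 1 + Polynomial.C m * Polynomial.X)).prod : Polynomial ℝ).eval 1 := by
    conv_lhs => rw [hμ]
    rw [Polynomial.eval_mul, Polynomial.eval_C]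
  rw [hd, h1, mul_div_cancel_left₀ _ h0.ne']
  gcongr

lemma rz_min_le (g : Polynomial ℝ) (hr : ∀ z : ℂ, Polynomial.aeval z g = 0 → z.im = 0)
    (hpos : ∀ t : ℝ, 0 ≤ t → t ≤ 1 → 0 < g.eval t) (t : ℝ) (ht0 : 0 ≤ t) (ht1 : t ≤ 1) :
    min (g.eval 0) (g.eval 1) ≤ g.eval t := by
  have h0 := hpos 0 le_rfl zero_le_one
  obtain ⟨μ, hμ⟩ := real_factor g h0 hr
  have hm := factor_pos g hpos μ _ hμ
  have i2 := (prod_pos_tangent μ hm).2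
  have i3 := prod_rpow μ hm t ht0 ht1
  have h1 : ∀ s, g.eval s = g.eval 0 *
      ((μ.map (fun m => 1 + Polynomial.C m * Polynomial.X)).prod : Polynomial ℝ).eval s := by
    intro s
    conv_lhs => rw [hμ]
    rw [Polynomial.eval_mul, Polynomial.eval_C]
  rw [h1 1, h1 t]
  set P := ((μ.map (fun m => 1 + Polynomial.C m * Polynomial.X)).prod : Polynomial ℝ)
  rcases le_total (P.eval 1) 1 with hP | hP
  · refine (min_le_right _ _).trans ?_
    refine mul_le_mul_of_nonneg_left (le_trans ?_ i3) h0.le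
    exact Real.self_le_rpow_of_le_one i2.le hP ht1
  · refine (min_le_left _ _).trans ?_
    have : 1 ≤ (P.eval 1) ^ t := Real.one_le_rpow hP ht0
    nlinarith

/-- The star-shaped description of the component. -/
def starC {n : ℕ} (p : MvPolynomial (Fin n) ℝ) (e : Fin n → ℝ) : Set (Fin n → ℝ) :=
  {a | ∀ t : ℝ, 0 ≤ t → t ≤ 1 → 0 < eval (e + t • (a - e)) p}

lemma RZf.line {n : ℕ} {p : MvPolynomial (Fin n) ℝ} {e : Fin n → ℝ} (h : RZf p e)
    (v : Fin n → ℝ) : ∀ z : ℂ, Polynomial.aeval z (lineEvalAdd p e v) = 0 → z.im = 0 := by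
  intro z hz
  exact h.2 v z (by rwa [lineEval_aeval] at hz)

lemma isOpen_pos {n : ℕ} (p : MvPolynomial (Fin n) ℝ) : IsOpen {x | 0 < eval x p} :=
  isOpen_lt continuous_const (MvPolynomial.continuous_eval p)

lemma starC_eq {n : ℕ} {p : MvPolynomial (Fin n) ℝ} {e : Fin n → ℝ} (h : RZf p e) :
    connectedComponentIn {x | 0 < eval x p} e = starC p e := by
  have he : e ∈ {x | 0 < eval x p} := h.1
  have hpc := MvPolynomial.continuous_eval p
  apply Set.Subset.antisymm
  · have hopen : IsOpen (starC p e) := by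
      rw [isOpen_iff_mem_nhds]
      intro a ha
      have hc : Continuous (fun q : (Fin n → ℝ) × ℝ => eval (e + q.2 • (q.1 - e)) p) :=
        hpc.comp (by fun_prop)
      have : ∀ᶠ b in nhds a, ∀ t ∈ Set.Icc (0:ℝ) 1, 0 < eval (e + t • (b - e)) p := by
        refine isCompact_Icc.eventually_forall_of_forall_eventually fun t ht => ?_
        exact (hc.continuousAt (x := (a, t))).eventually (lt_mem_nhds (ha t ht.1 ht.2))
      filter_upwards [this] with b hb t h0 h1
      exact hb t ⟨h0, h1⟩
    refine isPreconnected_connectedComponentIn.subset_of_closure_inter_subset hopen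
      ⟨e, mem_connectedComponentIn he, ?_⟩ ?_
    · intro t _ _; simpa using h.1
    · rintro a ⟨ha, ha'⟩
      have hpa : a ∈ {x | 0 < eval x p} := connectedComponentIn_subset _ _ ha'
      have hcl : IsClosed {b : Fin n → ℝ | ∀ t ∈ Set.Icc (0:ℝ) 1,
          min (eval e p) (eval b p) ≤ eval (e + t • (b - e)) p} := by
        simp only [Set.setOf_forall]
        refine isClosed_iInter fun t => isClosed_iInter fun _ => ?_
        exact isClosed_le (continuous_const.min hpc) (hpc.comp (by fun_prop))
      have hsub : starC p e ⊆ {b : Fin n → ℝ | ∀ t ∈ Set.Icc (0:ℝ) 1,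
          min (eval e p) (eval b p) ≤ eval (e + t • (b - e)) p} := by
        intro b hb t ht
        have := rz_min_le (lineEvalAdd p e (b - e)) (h.line _)
          (fun s h0 h1 => by rw [lineEval_eval]; exact hb s h0 h1) t ht.1 ht.2
        simpa [lineEval_eval] using this
      have := closure_minimal hsub hcl ha
      intro t h0 h1
      exact lt_of_lt_of_le (lt_min h.1 hpa) (this t ⟨h0, h1⟩)
  · intro a ha
    have hseg : segment ℝ e a ⊆ {x | 0 < eval x p} := by
      rw [segment_eq_image']
      rintro _ ⟨t, ht, rfl⟩
      exact ha t ht.1 ht.2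
    exact (convex_segment e a).isPreconnected.subset_connectedComponentIn
      (left_mem_segment ℝ e a) hseg (right_mem_segment ℝ e a)

lemma RZf.of_mem {n : ℕ} {p : MvPolynomial (Fin n) ℝ} {e a : Fin n → ℝ} (h : RZf p e)
    (ha : a ∈ connectedComponentIn {x | 0 < eval x p} e) : RZf p a :=
  rz_move h (by rw [starC_eq h] at ha; exact ha)

lemma comp_eq {n : ℕ} {p : MvPolynomial (Fin n) ℝ} {e a : Fin n → ℝ} (h : RZf p e)
    (ha : a ∈ connectedComponentIn {x | 0 < eval x p} e) :
    connectedComponentIn {x | 0 < eval x p} e = starC p a := by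
  rw [connectedComponentIn_eq ha, starC_eq (h.of_mem ha)]

lemma comp_convex {n : ℕ} {p : MvPolynomial (Fin n) ℝ} {e : Fin n → ℝ} (h : RZf p e) :
    Convex ℝ (connectedComponentIn {x | 0 < eval x p} e) := by
  rw [convex_iff_segment_subset]
  intro x hx y hy
  rw [comp_eq h hx] at hy ⊢
  rw [segment_eq_image']
  rintro _ ⟨t, ht, rfl⟩
  intro s hs0 hs1
  have := hy (s * t) (mul_nonneg hs0 ht.1) (mul_le_one₀ hs1 ht.1 ht.2)
  simpa [mul_smul] using this

lemma lineEval_derivative {n : ℕ} (p : MvPolynomial (Fin n) ℝ) (e v : Fin n → ℝ) :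
    (lineEvalAdd p e v).derivative =
      ∑ i, Polynomial.C (v i) * lineEvalAdd (pderiv i p) e v := by
  unfold lineEvalAdd
  induction p using MvPolynomial.induction_on with
  | C a => simp
  | add p q hp hq => simp [hp, hq, mul_add, Finset.sum_add_distrib]
  | mul_X p j hp =>
    simp only [map_mul, aeval_X, Polynomial.derivative_mul, hp, Derivation.leibniz, pderiv_X,
      smul_eq_mul, map_add, mul_add, Finset.sum_add_distrib]
    have : ∀ x : Fin n, (aeval fun i ↦ Polynomial.C (e i) + Polynomial.C (v i) * Polynomial.X)
       ((Pi.single x 1 : Fin n → MvPolynomial (Fin n) ℝ) j) =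
        if j = x then (1 : Polynomial ℝ) else 0 := by
      intro x
      by_cases hx : j = x
      · subst hx; simp
      · simp [hx, Pi.single_eq_of_ne]
    simp only [this, mul_ite, mul_one, mul_zero, Finset.sum_ite_eq, Finset.mem_univ, if_true]
    simp only [Polynomial.derivative_C, Polynomial.derivative_X, zero_mul, mul_one, zero_add, Finset.sum_mul]
    have hs : ∀ (f : Fin n → Polynomial ℝ) (c d : Polynomial ℝ),
        ∑ x, Polynomial.C (v x) * ((c + d) * f x) =
          ∑ x, Polynomial.C (v x) * f x * c + ∑ x, Polynomial.C (v x) * f x * d := by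
      intro f c d
      rw [← Finset.sum_add_distrib]
      exact Finset.sum_congr rfl fun i _ => by ring
    rw [hs]
    simp only [← mul_assoc]
    ring

lemma log_tangent {n : ℕ} {p : MvPolynomial (Fin n) ℝ} {e a b : Fin n → ℝ} (h : RZf p e)
    (ha : a ∈ connectedComponentIn {x | 0 < eval x p} e)
    (hb : b ∈ connectedComponentIn {x | 0 < eval x p} e) :
    eval b p ≤ eval a p * Real.exp ((∑ i, (b i - a i) * eval a (pderiv i p)) / eval a p) := by
  rw [comp_eq h ha] at hb
  have := tangent (lineEvalAdd p a (b - a)) ((h.of_mem ha).line _)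
    (fun s h0 h1 => by rw [lineEval_eval]; exact hb s h0 h1)
  simpa [lineEval_derivative, Polynomial.eval_finsetSum, lineEval_eval] using this

lemma factor_X (N : Polynomial ℝ) (hN : N ≠ 0) :
    ∃ (j : ℕ) (N1 : Polynomial ℝ), N = Polynomial.X ^ j * N1 ∧ N1.eval 0 ≠ 0 := by
  obtain ⟨q, hq, hd⟩ := N.exists_eq_pow_rootMultiplicity_mul_and_not_dvd hN 0
  rw [Polynomial.dvd_iff_isRoot] at hd
  exact ⟨_, q, by simpa using hq, hd⟩

lemma poly_tendsto (N : Polynomial ℝ) :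
    Filter.Tendsto (fun s => N.eval s) (nhdsWithin 0 (Set.Ioi 0)) (nhds (N.eval 0)) :=
  (N.continuous.tendsto 0).mono_left nhdsWithin_le_nhds

lemma poly_order (N : Polynomial ℝ) (c : ℝ) (m : ℕ)
    (h : ∀ᶠ s in nhdsWithin (0:ℝ) (Set.Ioi 0), |N.eval s| ≤ c * s ^ m) : Polynomial.X ^ m ∣ N := by
  by_cases hN : N = 0
  · simp [hN]
  obtain ⟨j, N1, hN1, h0⟩ := factor_X N hN
  by_cases hj : m ≤ j
  · rw [hN1]
    exact (pow_dvd_pow _ hj).mul_right _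
  exfalso
  push Not at hj
  have h1 : ∀ᶠ s in nhdsWithin (0:ℝ) (Set.Ioi 0), |N1.eval s| ≤ c * s ^ (m - j) := by
    filter_upwards [h, self_mem_nhdsWithin] with s hs hs0
    have hs0 : 0 < s := hs0
    have hp : 0 < s ^ j := pow_pos hs0 j
    rw [hN1] at hs
    simp only [Polynomial.eval_mul, Polynomial.eval_pow, Polynomial.eval_X, abs_mul,
      abs_of_pos hp] at hs
    have e1 : s ^ m = s ^ j * s ^ (m - j) := by rw [← pow_add]; congr 1; omega
    rw [e1] at hs
    nlinarith
  have h2 : Filter.Tendsto (fun s : ℝ => c * s ^ (m - j)) (nhdsWithin 0 (Set.Ioi 0)) (nhds 0) := by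
    have : Filter.Tendsto (fun s : ℝ => c * s ^ (m - j)) (nhds 0) (nhds (c * 0 ^ (m - j))) :=
      (Continuous.tendsto (by fun_prop) 0)
    rw [zero_pow (by omega), mul_zero] at this
    exact this.mono_left nhdsWithin_le_nhds
  have h3 := le_of_tendsto_of_tendsto (poly_tendsto N1).abs h2 h1
  exact h0 (abs_nonpos_iff.1 h3)

lemma exp_bound (K s : ℝ) (hK : 0 < K) (hs : 0 < s) (j : ℕ) :
    Real.exp (-(K / s)) ≤ (j.factorial / K ^ j) * s ^ j := by
  have h := Real.pow_div_factorial_le_exp (x := K / s) (by positivity) j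
  rw [Real.exp_neg]
  have hf : (0:ℝ) < j.factorial := by exact_mod_cast j.factorial_pos
  have : (j.factorial / K ^ j) * s ^ j = ((K / s) ^ j / j.factorial)⁻¹ := by
    rw [div_pow]; field_simp
  rw [this]
  exact inv_anti₀ (by positivity) h

lemma biv_continuous (R : Polynomial (Polynomial ℝ)) :
    Continuous (fun q : ℝ × ℝ => (R.map (Polynomial.evalRingHom q.1)).eval q.2) := by
  induction R using Polynomial.induction_on' with
  | add p q hp hq =>
    simp only [Polynomial.map_add, Polynomial.eval_add]
    exact hp.add hq
  | monomial n a =>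
    simp only [Polynomial.map_monomial, Polynomial.eval_monomial, Polynomial.coe_evalRingHom]
    exact (a.continuous.comp continuous_fst).mul (continuous_snd.pow n)

lemma exists_biv {n : ℕ} (p : MvPolynomial (Fin n) ℝ) (x u v : Fin n → ℝ) :
    ∃ Q : Polynomial (Polynomial ℝ), ∀ t : ℝ,
      Q.map (Polynomial.evalRingHom t) = lineEvalAdd p (x + t • v) u := by
  refine ⟨aeval (fun i => Polynomial.C (Polynomial.C (x i) + Polynomial.C (v i) * Polynomial.X) +
    Polynomial.C (Polynomial.C (u i)) * Polynomial.X) p, fun t => ?_⟩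
  unfold lineEvalAdd
  induction p using MvPolynomial.induction_on with
  | C a =>
    simp only [MvPolynomial.aeval_C]
    rw [Polynomial.algebraMap_apply, Polynomial.algebraMap_apply, Polynomial.map_C]
    simp
  | add p q hp hq => rw [map_add, Polynomial.map_add, hp, hq, map_add]
  | mul_X p i hp =>
    rw [map_mul, Polynomial.map_mul, hp, map_mul, aeval_X, aeval_X]
    congr 1
    simp only [Polynomial.map_add, Polynomial.map_mul, Polynomial.map_C, Polynomial.map_X,
      Polynomial.coe_evalRingHom, Polynomial.eval_add, Polynomial.eval_mul, Polynomial.eval_C,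
      Polynomial.eval_X, Pi.add_apply, Pi.smul_apply, smul_eq_mul, mul_comm t]

lemma triangle {n : ℕ} {K : Set (Fin n → ℝ)} (hK : Convex ℝ K) (ho : IsOpen K)
    {e x y : Fin n → ℝ} (he : e ∈ K) (hx : x ∈ closure K) (hy : y ∈ closure K) {s t : ℝ}
    (hs : 0 < s) (ht : 0 ≤ t) (hst : s + t ≤ 1) : x + s • (e - x) + t • (y - x) ∈ K := by
  rcases (show s ≤ 1 by linarith).eq_or_lt with h1 | h1
  · have : t = 0 := by linarith
    subst h1 this
    simpa using he
  · have hs1 : 0 < 1 - s := by linarith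
    have hw : (1 - t / (1 - s)) • x + (t / (1 - s)) • y ∈ closure K :=
      hK.closure hx hy (by rw [sub_nonneg, div_le_one hs1]; linarith) (by positivity) (by ring)
    have := hK.combo_interior_closure_mem_interior (by rwa [ho.interior_eq]) hw hs hs1.le
      (by ring)
    rw [ho.interior_eq] at this
    convert this using 1
    funext i
    simp only [Pi.add_apply, Pi.smul_apply, Pi.sub_apply, smul_eq_mul]
    field_simp
    ring

lemma core {n : ℕ} {p : MvPolynomial (Fin n) ℝ} {e x : Fin n → ℝ} {K : Set (Fin n → ℝ)}
    (h : RZf p e) (hKdef : K = connectedComponentIn {x | 0 < eval x p} e)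
    (hx : x ∈ closure K) (hpx : eval x p = 0) :
    ∃ a : Fin n → ℝ, (∀ y ∈ closure K, 0 ≤ ∑ i, a i * (y i - x i)) ∧
      0 < ∑ i, a i * (e i - x i) ∧
      ∀ y ∈ closure K, ∑ i, a i * (y i - x i) = 0 →
        ∃ ε : ℝ, 0 < ε ∧ x - ε • (y - x) ∈ closure K := by
  have hKo : IsOpen K := hKdef ▸ (isOpen_pos p).connectedComponentIn
  have hKc : Convex ℝ K := hKdef ▸ comp_convex h
  have heK : e ∈ K := hKdef ▸ mem_connectedComponentIn h.1
  have hKpos : ∀ y ∈ K, 0 < eval y p := by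
    intro y hy
    rw [hKdef] at hy
    have : y ∈ {x | 0 < eval x p} := connectedComponentIn_subset _ _ hy
    exact this
  obtain ⟨u, hu⟩ : ∃ u, u = e - x := ⟨_, rfl⟩
  have htri : ∀ y ∈ closure K, ∀ s t : ℝ, 0 < s → 0 ≤ t → s + t ≤ 1 →
      x + s • u + t • (y - x) ∈ K := by
    intro y hy s t hs ht hst
    rw [hu]
    exact triangle hKc hKo heK hx hy hs ht hst
  have hline : ∀ s : ℝ, 0 < s → s ≤ 1 → x + s • u ∈ K := by
    intro s hs hs1
    simpa using htri x hx s 0 hs le_rfl (by linarith)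
  obtain ⟨H, hH⟩ : ∃ H, H = lineEvalAdd p x u := ⟨_, rfl⟩
  have hHe : ∀ s, H.eval s = eval (x + s • u) p := by
    intro s; rw [hH, lineEval_eval]
  have hHpos : ∀ s : ℝ, 0 < s → s ≤ 1 → 0 < H.eval s := by
    intro s hs hs1
    rw [hHe]
    exact hKpos _ (hline s hs hs1)
  have hH0 : H ≠ 0 := by
    intro h0
    have := hHpos 1 one_pos le_rfl
    simp [h0] at this
  obtain ⟨m, h1, hHm, hh1⟩ := factor_X H hH0
  have hm : m ≠ 0 := by
    rintro rfl
    have : H.eval 0 = h1.eval 0 := by rw [hHm]; simp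
    rw [hHe] at this
    simp [hpx] at this
    exact hh1 this.symm
  have hh1pos : ∀ s : ℝ, 0 < s → s ≤ 1 → 0 < h1.eval s := by
    intro s hs hs1
    have := hHpos s hs hs1
    rw [hHm, Polynomial.eval_mul, Polynomial.eval_pow, Polynomial.eval_X] at this
    exact (pos_iff_pos_of_mul_pos this).1 (pow_pos hs m)
  have hIoc : ∀ r : ℝ, 0 < r → ∀ᶠ s in nhdsWithin (0:ℝ) (Set.Ioi 0), 0 < s ∧ s ≤ r := by
    intro r hr
    exact Ioc_mem_nhdsGT hr
  have hh10 : 0 < h1.eval 0 := by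
    refine lt_of_le_of_ne ?_ hh1.symm
    refine ge_of_tendsto (poly_tendsto h1) ?_
    filter_upwards [hIoc 1 one_pos] with s hs
    exact (hh1pos s hs.1 hs.2).le
  obtain ⟨d, hd⟩ : ∃ d : Fin n → Polynomial ℝ, d = fun i => lineEvalAdd (pderiv i p) x u :=
    ⟨_, rfl⟩
  have hder : H.derivative = ∑ i, Polynomial.C (u i) * d i := by
    rw [hH, lineEval_derivative, hd]
  have hcoefH : ∀ j, H.derivative.coeff j = ∑ i, u i * (d i).coeff j := by
    intro j; rw [hder]; simp [Polynomial.finsetSum_coeff]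
  have hHcoefm : H.coeff m = h1.eval 0 := by
    rw [hHm, mul_comm, Polynomial.coeff_mul_X_pow', if_pos le_rfl, Nat.sub_self,
      Polynomial.coeff_zero_eq_eval_zero]
  have hex1 : ∃ i, (d i).coeff (m - 1) ≠ 0 := by
    by_contra hcon
    push Not at hcon
    have := hcoefH (m - 1)
    rw [Polynomial.coeff_derivative, Nat.sub_add_cancel (Nat.pos_of_ne_zero hm), hHcoefm] at this
    simp only [hcon, mul_zero, Finset.sum_const_zero] at this
    have h2 : (0:ℝ) < ((m - 1 : ℕ) : ℝ) + 1 := by positivity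
    exact (mul_pos hh10 h2).ne' this
  classical
  have hex : ∃ k, ∃ i, (d i).coeff k ≠ 0 := ⟨_, hex1⟩
  obtain ⟨k, hkdef⟩ : ∃ k, k = Nat.find hex := ⟨_, rfl⟩
  have hk1 : ∃ i, (d i).coeff k ≠ 0 := hkdef ▸ Nat.find_spec hex
  have hk2 : ∀ j < k, ∀ i, (d i).coeff j = 0 := by
    intro j hj i
    by_contra hcon
    exact Nat.find_min hex (hkdef ▸ hj) ⟨i, hcon⟩
  have hkm : k < m := by
    have : k ≤ m - 1 := by rw [hkdef]; exact Nat.find_min' hex hex1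
    omega
  have hdvd : ∀ i, ∃ D, d i = Polynomial.X ^ k * D := fun i =>
    Polynomial.X_pow_dvd_iff.2 (fun j hj => hk2 j hj i)
  choose D hD using hdvd
  obtain ⟨a, ha⟩ : ∃ a : Fin n → ℝ, a = fun i => (d i).coeff k := ⟨_, rfl⟩
  have haD : ∀ i, (D i).eval 0 = a i := by
    intro i
    rw [ha]
    simp only
    rw [hD i, mul_comm, Polynomial.coeff_mul_X_pow', if_pos le_rfl, Nat.sub_self,
      Polynomial.coeff_zero_eq_eval_zero]
  obtain ⟨B, hB⟩ : ∃ B : (Fin n → ℝ) → Polynomial ℝ,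
    B = fun v => ∑ i, Polynomial.C (v i) * D i := ⟨_, rfl⟩
  have hB0 : ∀ v, (B v).eval 0 = ∑ i, a i * v i := by
    intro v
    rw [hB]
    simp [Polynomial.eval_finsetSum, haD, mul_comm]
  -- main inequality
  have hineq : ∀ y ∈ closure K, ∀ s t : ℝ, 0 < s → s ≤ 1/2 → 0 ≤ t → t ≤ 1/2 →
      0 < eval (x + s • u + t • (y - x)) p ∧
      eval (x + s • u + t • (y - x)) p ≤ s ^ m * h1.eval s *
        Real.exp (t * (s ^ k * (B (y - x)).eval s / (s ^ m * h1.eval s))) := by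
    intro y hy s t hs hs2 ht ht2
    have hb := htri y hy s t hs ht (by linarith)
    refine ⟨hKpos _ hb, ?_⟩
    have hl := hline s hs (by linarith)
    rw [hKdef] at hb hl
    have := log_tangent h hl hb
    have e1 : eval (x + s • u) p = s ^ m * h1.eval s := by
      rw [← hHe, hHm]; simp
    rw [e1] at this
    convert this using 3
    rw [← mul_div_assoc]
    congr 1
    have e2 : ∀ i, eval (x + s • u) (pderiv i p) = s ^ k * (D i).eval s := by
      intro i
      rw [← lineEval_eval]
      have : lineEvalAdd (pderiv i p) x u = d i := by rw [hd]
      rw [this, hD i]; simp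
    rw [hB]
    simp only [e2, Polynomial.eval_finsetSum, Polynomial.eval_mul, Polynomial.eval_C,
      Finset.mul_sum]
    refine Finset.sum_congr rfl fun i _ => ?_
    simp
    ring
  -- nonnegativity
  have hnonneg : ∀ y ∈ closure K, 0 ≤ ∑ i, a i * (y i - x i) := by
    intro y hy
    by_contra hneg
    push Not at hneg
    have hBneg : (B (y - x)).eval 0 < 0 := by rw [hB0]; exact hneg
    obtain ⟨l, hl⟩ : ∃ l, l = (B (y - x)).eval 0 := ⟨_, rfl⟩
    obtain ⟨M, hM⟩ : ∃ M, M = h1.eval 0 + 1 := ⟨_, rfl⟩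
    have hMpos : 0 < M := by rw [hM]; linarith
    have ev1 := (poly_tendsto (B (y - x))).eventually (gt_mem_nhds (show _ < l / 2 by rw [← hl]; linarith))
    have ev2 := (poly_tendsto h1).eventually (gt_mem_nhds (show _ < M by rw [hM]; linarith))
    obtain ⟨N, hN⟩ : ∃ N, N = lineEvalAdd p (x + (1/2 : ℝ) • (y - x)) u := ⟨_, rfl⟩
    have hNe : ∀ s, N.eval s = eval (x + s • u + (1/2 : ℝ) • (y - x)) p := by
      intro s; rw [hN, lineEval_eval]; congr 2; abel
    obtain ⟨κ, hκ⟩ : ∃ κ, κ = -l / (4 * M) := ⟨_, rfl⟩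
    have hκpos : 0 < κ := by rw [hκ]; apply div_pos <;> linarith
    have hall : ∀ j, Polynomial.X ^ j ∣ N := by
      intro j
      apply poly_order N (M * (j.factorial / κ ^ j)) j
      filter_upwards [ev1, ev2, hIoc (1/2) (by norm_num)] with s hs1 hs2 ⟨hs0, hsh⟩
      obtain ⟨q1, q2⟩ := hineq y hy s (1/2) hs0 hsh (by norm_num) le_rfl
      rw [hNe, abs_of_pos q1]
      refine q2.trans ?_
      have hh := hh1pos s hs0 (by linarith)
      have hsm : s ^ m ≤ 1 := pow_le_one₀ hs0.le (by linarith)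
      have hle : (1/2 : ℝ) * (s ^ k * (B (y - x)).eval s / (s ^ m * h1.eval s)) ≤ -(κ / s) := by
        have e3 : s ^ m = s ^ k * (s * s ^ (m - k - 1)) := by
          rw [← pow_succ', ← pow_add]; congr 1; omega
        have hq1 : s ^ (m - k - 1) ≤ 1 := pow_le_one₀ hs0.le (by linarith)
        have hq0 : 0 < s ^ (m - k - 1) := pow_pos hs0 _
        have hsk : 0 < s ^ k := pow_pos hs0 k
        rw [e3]
        have e4 : (1/2 : ℝ) * (s ^ k * (B (y - x)).eval s / (s ^ k * (s * s ^ (m - k - 1)) * h1.eval s))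
          = -(((-(B (y - x)).eval s / 2) / (s ^ (m - k - 1) * h1.eval s)) / s) := by
          field_simp
        rw [e4, neg_le_neg_iff]
        gcongr
        have e5 : κ = (-l / 4) / M := by rw [hκ]; field_simp
        rw [e5]
        have hl0 : l < 0 := by rw [hl]; exact hBneg
        apply div_le_div₀
        · linarith
        · linarith
        · positivity
        · nlinarith
      calc s ^ m * h1.eval s * Real.exp _ ≤ 1 * M * Real.exp (-(κ / s)) := by
            gcongr
        _ ≤ 1 * M * ((j.factorial / κ ^ j) * s ^ j) := by
            gcongr
            exact exp_bound κ s hκpos hs0 j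
        _ = _ := by ring
    have hN0 : N = 0 := by
      ext j
      have := Polynomial.X_pow_dvd_iff.1 (hall (j + 1)) j (Nat.lt_succ_self j)
      simpa using this
    have q1 := (hineq y hy (1/2) (1/2) (by norm_num) le_rfl (by norm_num) le_rfl).1
    rw [← hNe, hN0] at q1
    simp at q1
  have hupos : 0 < ∑ i, a i * (e i - x i) := by
    obtain ⟨i0, hi0⟩ := hk1
    have hai : a i0 ≠ 0 := by rw [ha]; exact hi0
    have hsq : 0 < ∑ i, a i * a i :=
      Finset.sum_pos' (fun i _ => mul_self_nonneg _) ⟨i0, Finset.mem_univ _, mul_self_pos.2 hai⟩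
    have hc : Filter.Tendsto (fun η : ℝ => e - η • a) (nhdsWithin 0 (Set.Ioi 0)) (nhds e) := by
      have : Filter.Tendsto (fun η : ℝ => e - η • a) (nhds 0) (nhds (e - (0:ℝ) • a)) :=
        Continuous.tendsto (by fun_prop) 0
      simp only [zero_smul, sub_zero] at this
      exact this.mono_left nhdsWithin_le_nhds
    obtain ⟨η, hη1, hη2, -⟩ := ((hc.eventually (hKo.mem_nhds heK)).and (hIoc 1 one_pos)).exists
    have := hnonneg _ (subset_closure hη1)
    have e1 : ∑ i, a i * ((e - η • a) i - x i) = ∑ i, a i * (e i - x i) - η * ∑ i, a i * a i := by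
      rw [Finset.mul_sum, ← Finset.sum_sub_distrib]
      refine Finset.sum_congr rfl fun i _ => ?_
      simp
      ring
    rw [e1] at this
    have := mul_pos hη2 hsq
    linarith
  have hkm1 : k + 1 = m := by
    by_contra hne
    have hlt : k + 1 < m := by omega
    have h2 := hcoefH k
    have h3 : H.coeff (k + 1) = 0 := Polynomial.X_pow_dvd_iff.1 ⟨h1, hHm⟩ _ hlt
    rw [Polynomial.coeff_derivative, h3, zero_mul] at h2
    have : ∑ i, a i * (e i - x i) = ∑ i, u i * (d i).coeff k := by
      rw [ha, hu]
      exact Finset.sum_congr rfl fun i _ => by simp [mul_comm]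
    linarith
  refine ⟨a, hnonneg, hupos, ?_⟩
  intro y hy hy0
  obtain ⟨v, hv⟩ : ∃ v, v = y - x := ⟨_, rfl⟩
  have hBv0 : (B v).eval 0 = 0 := by rw [hB0, hv]; exact hy0
  obtain ⟨B2, hB2⟩ : Polynomial.X ∣ B v := by
    rw [Polynomial.X_dvd_iff, Polynomial.coeff_zero_eq_eval_zero, hBv0]
  obtain ⟨Q, hQ⟩ := exists_biv p x u v
  have hQe : ∀ t s : ℝ, (Q.map (Polynomial.evalRingHom t)).eval s = eval (x + s • u + t • v) p := by
    intro t s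
    rw [hQ, lineEval_eval]; congr 2; abel
  have hQdvd : ∀ t : ℝ, 0 ≤ t → t ≤ 1/2 → Polynomial.X ^ m ∣ Q.map (Polynomial.evalRingHom t) := by
    intro t ht ht2
    obtain ⟨M, hM⟩ : ∃ M, M = h1.eval 0 + 1 := ⟨_, rfl⟩
    have hMp : 0 < M := by rw [hM]; linarith
    obtain ⟨L, hL⟩ : ∃ L, L = B2.eval 0 / h1.eval 0 + 1 := ⟨_, rfl⟩
    have ev2 := (poly_tendsto h1).eventually (gt_mem_nhds (show _ < M by rw [hM]; linarith))
    have ev1 := ((poly_tendsto B2).div (poly_tendsto h1) hh1).eventually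
      (gt_mem_nhds (show _ < L by rw [hL]; linarith))
    apply poly_order _ (M * Real.exp (t * L)) m
    filter_upwards [ev1, ev2, hIoc (1/2) (by norm_num)] with s hs1 hs2 ⟨hs0, hsh⟩
    obtain ⟨q1, q2⟩ := hineq y hy s t hs0 hsh ht ht2
    rw [← hv] at q1 q2
    rw [hQe, abs_of_pos q1]
    refine q2.trans ?_
    have hh := hh1pos s hs0 (by linarith)
    have e1 : s ^ k * (B v).eval s / (s ^ m * h1.eval s) = B2.eval s / h1.eval s := by
      rw [hB2, ← hkm1, pow_succ]
      simp
      field_simp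
    rw [e1]
    calc s ^ m * h1.eval s * Real.exp (t * (B2.eval s / h1.eval s))
        ≤ s ^ m * M * Real.exp (t * L) := by
          gcongr
          exact hs1.le
      _ = _ := by ring
  obtain ⟨R, hR⟩ : Polynomial.X ^ m ∣ Q := by
    rw [Polynomial.X_pow_dvd_iff]
    intro j hj
    apply Polynomial.eq_zero_of_infinite_isRoot
    refine Set.Infinite.mono ?_ (Set.Icc_infinite (show (0:ℝ) < 1/2 by norm_num))
    intro t ht
    have := Polynomial.X_pow_dvd_iff.1 (hQdvd t ht.1 ht.2) j hj
    rw [Polynomial.coeff_map] at this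
    exact this
  have hRe : ∀ t s : ℝ, eval (x + s • u + t • v) p =
      s ^ m * (R.map (Polynomial.evalRingHom t)).eval s := by
    intro t s
    rw [← hQe, hR]; simp
  have hR0 : R.map (Polynomial.evalRingHom 0) = h1 := by
    have e1 : Q.map (Polynomial.evalRingHom 0) = H := by rw [hQ, hH]; simp
    rw [hR, hHm, Polynomial.map_mul, Polynomial.map_pow, Polynomial.map_X] at e1
    exact mul_left_cancel₀ (pow_ne_zero _ Polynomial.X_ne_zero) e1
  have hev1 : ∀ᶠ t in nhds (0:ℝ), ∀ s ∈ Set.Icc (0:ℝ) 1,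
      0 < (R.map (Polynomial.evalRingHom t)).eval s := by
    refine isCompact_Icc.eventually_forall_of_forall_eventually fun s hs => ?_
    refine ((biv_continuous R).continuousAt (x := ((0:ℝ), s))).eventually (lt_mem_nhds ?_)
    simp only [hR0]
    rcases hs.1.eq_or_lt with h0 | h0
    · rw [← h0]; exact hh10
    · exact hh1pos s h0 hs.2
  have hev2 : ∀ᶠ t in nhds (0:ℝ), e + t • v ∈ K := by
    have : Filter.Tendsto (fun η : ℝ => e + η • v) (nhds 0) (nhds (e + (0:ℝ) • v)) :=
      Continuous.tendsto (by fun_prop) 0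
    simp only [zero_smul, add_zero] at this
    exact this.eventually (hKo.mem_nhds heK)
  obtain ⟨ε, hε, hball⟩ := Metric.eventually_nhds_iff.1 (hev1.and hev2)
  obtain ⟨c1, c2⟩ := hball (y := -(ε/2)) (by
    rw [dist_zero_right, norm_neg, Real.norm_eq_abs, abs_of_pos (by linarith)]; linarith)
  refine ⟨ε/2, by linarith, ?_⟩
  have hin : ∀ s : ℝ, 0 < s → s ≤ 1 → x + s • u + (-(ε/2)) • v ∈ K := by
    intro s hs hs1
    have c3 := c2
    rw [hKdef] at c3
    have : K = starC p (e + (-(ε/2)) • v) := by rw [hKdef]; exact comp_eq h c3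
    rw [this]
    intro τ hτ0 hτ1
    have e1 : e + (-(ε/2)) • v + τ • (x + s • u + (-(ε/2)) • v - (e + (-(ε/2)) • v)) =
        x + (1 - τ + τ * s) • u + (-(ε/2)) • v := by
      rw [hu]
      funext i
      simp
      ring
    rw [e1, hRe]
    have hs' : 0 < 1 - τ + τ * s := by
      rcases hτ1.eq_or_lt with h | h
      · subst h; simpa using hs
      · nlinarith
    exact mul_pos (pow_pos hs' m) (c1 _ ⟨hs'.le, by nlinarith⟩)
  have hlim : Filter.Tendsto (fun s : ℝ => x + s • u + (-(ε/2)) • v) (nhdsWithin 0 (Set.Ioi 0))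
      (nhds (x - (ε/2) • (y - x))) := by
    have : Filter.Tendsto (fun s : ℝ => x + s • u + (-(ε/2)) • v) (nhds 0)
      (nhds (x + (0:ℝ) • u + (-(ε/2)) • v)) := Continuous.tendsto (by fun_prop) 0
    have e1 : x + (0:ℝ) • u + (-(ε/2)) • v = x - (ε/2) • (y - x) := by
      rw [hv, zero_smul, add_zero, neg_smul, ← sub_eq_add_neg]
    rw [e1] at this
    exact this.mono_left nhdsWithin_le_nhds
  refine mem_closure_of_tendsto hlim ?_
  filter_upwards [hIoc 1 one_pos] with s hs
  exact hin s hs.1 hs.2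

lemma relint_extend {n : ℕ} {F : Set (Fin n → ℝ)} {x z : Fin n → ℝ}
    (hx : x ∈ intrinsicInterior ℝ F) (hz : z ∈ F) :
    ∃ ε : ℝ, 0 < ε ∧ x - ε • (z - x) ∈ F := by
  obtain ⟨x', hx', rfl⟩ := mem_intrinsicInterior.1 hx
  have hzs : z ∈ affineSpan ℝ F := subset_affineSpan ℝ F hz
  let f : ℝ → affineSpan ℝ F := fun t =>
    ⟨AffineMap.lineMap (x' : Fin n → ℝ) z t, AffineMap.lineMap_mem t x'.2 hzs⟩
  have hf : Continuous f := by
    refine Continuous.subtype_mk ?_ _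
    exact AffineMap.lineMap_continuous
  have hf0 : f 0 = x' := by apply Subtype.ext; simp [f]
  have hev : ∀ᶠ t in nhds (0:ℝ), f t ∈ interior ((↑) ⁻¹' F : Set (affineSpan ℝ F)) := by
    refine hf.continuousAt.eventually (isOpen_interior.mem_nhds ?_)
    rw [hf0]; exact hx'
  obtain ⟨ε, hε, hball⟩ := Metric.eventually_nhds_iff.1 hev
  have := interior_subset (hball (y := -(ε/2)) (by
    rw [dist_zero_right, norm_neg, Real.norm_eq_abs, abs_of_pos (by linarith)]; linarith))
  refine ⟨ε/2, by linarith, ?_⟩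
  have h2 : (AffineMap.lineMap (x' : Fin n → ℝ) z (-(ε/2)) : Fin n → ℝ) ∈ F := this
  rw [AffineMap.lineMap_apply_module'] at h2
  convert h2 using 1
  rw [neg_smul]; abel

lemma face_extend {n : ℕ} {S F : Set (Fin n → ℝ)} (hF : IsFaceOf S F) {x y : Fin n → ℝ}
    (hx : x ∈ F) (hy : y ∈ S) {ε : ℝ} (hε : 0 < ε) (h : x - ε • (y - x) ∈ S) : y ∈ F := by
  refine (hF.2.2.2 y hy _ h (ε / (1 + ε)) (by positivity)
    (by rw [div_lt_one (by linarith)]; linarith) ?_).1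
  convert hx using 1
  funext i
  simp
  field_simp
  ring

/-- Every face of a rigidly convex set is exposed. -/
theorem rigidlyConvex_faces_exposed {n : ℕ} (S : Set (Fin n → ℝ))
    (hS : RigidlyConvex S) :
    ∀ F : Set (Fin n → ℝ), IsFaceOf S F → IsExposedFaceOf S F := by
  obtain ⟨e, p, heS, hrz, hSe⟩ := hS
  intro F hF
  have h := hrz.rzf
  obtain ⟨K, hKdef⟩ : ∃ K, K = connectedComponentIn {x | 0 < eval x p} e := ⟨_, rfl⟩
  rw [← hKdef] at hSe
  have hKo : IsOpen K := hKdef ▸ (isOpen_pos p).connectedComponentIn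
  have heK : e ∈ K := hKdef ▸ mem_connectedComponentIn h.1
  obtain ⟨x, hx⟩ := Set.Nonempty.intrinsicInterior hF.2.1 hF.1
  have hxF : x ∈ F := intrinsicInterior_subset hx
  have hxS : x ∈ closure K := hSe ▸ hF.2.2.1 hxF
  have hpc := MvPolynomial.continuous_eval p
  have hpx : 0 ≤ eval x p := by
    have hsub : K ⊆ {x | 0 ≤ eval x p} := by
      intro y hy
      rw [hKdef] at hy
      have : y ∈ {x | 0 < eval x p} := connectedComponentIn_subset _ _ hy
      exact le_of_lt (show 0 < eval y p from this)
    exact closure_minimal hsub (isClosed_le continuous_const hpc) hxS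
  rcases hpx.eq_or_lt with h0 | hpos
  · right
    obtain ⟨a, ha1, ha2, ha3⟩ := core h hKdef hxS h0.symm
    have haff : ∀ y, affEval a (-∑ i, a i * x i) y = ∑ i, a i * (y i - x i) := by
      intro y
      unfold affEval
      simp only [mul_sub, Finset.sum_sub_distrib]
      ring
    have hiff : {y | affEval a (-∑ i, a i * x i) y = 0} ∩ S = F := by
      ext z
      constructor
      · rintro ⟨hz0, hzS⟩
        have hz0 : affEval a (-∑ i, a i * x i) z = 0 := hz0
        rw [haff] at hz0
        obtain ⟨ε, hε, hm⟩ := ha3 z (hSe ▸ hzS) hz0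
        rw [← hSe] at hm
        exact face_extend hF hxF hzS hε hm
      · intro hz
        refine ⟨?_, hF.2.2.1 hz⟩
        show affEval a (-∑ i, a i * x i) z = 0
        rw [haff]
        obtain ⟨ε, hε, hm⟩ := relint_extend hx hz
        have q1 := ha1 z (hSe ▸ hF.2.2.1 hz)
        have q2 := ha1 _ (hSe ▸ hF.2.2.1 hm)
        have e1 : ∑ i, a i * ((x - ε • (z - x)) i - x i) = -(ε * ∑ i, a i * (z i - x i)) := by
          rw [Finset.mul_sum, ← Finset.sum_neg_distrib]
          refine Finset.sum_congr rfl fun i _ => ?_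
          simp
          ring
        rw [e1] at q2
        nlinarith
    refine ⟨a, -∑ i, a i * x i, ?_, ?_, ?_, hiff⟩
    · intro hz
      have := haff e
      rw [hz] at this
      simp only [Pi.zero_apply] at this
      linarith
    · intro y hy
      rw [haff]
      exact ha1 y (hSe ▸ hy)
    · rw [hiff]; exact hF.1
  · left
    have hxK : x ∈ K := by
      have hpre : IsPreconnected (insert x K) := by
        have hKp : IsPreconnected K := hKdef ▸ isPreconnected_connectedComponentIn
        refine hKp.subset_closure (Set.subset_insert _ _) ?_
        exact Set.insert_subset hxS subset_closure
      have hsub : insert x K ⊆ {x | 0 < eval x p} := by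
        refine Set.insert_subset hpos ?_
        rw [hKdef]; exact connectedComponentIn_subset _ _
      have := hpre.subset_connectedComponentIn (Set.mem_insert_of_mem x heK) hsub
      rw [hKdef]
      exact this (Set.mem_insert x K)
    apply Set.Subset.antisymm hF.2.2.1
    intro y hy
    have hlim : Filter.Tendsto (fun s : ℝ => x - s • (y - x)) (nhdsWithin 0 (Set.Ioi 0))
        (nhds x) := by
      have : Filter.Tendsto (fun s : ℝ => x - s • (y - x)) (nhds 0)
        (nhds (x - (0:ℝ) • (y - x))) := Continuous.tendsto (by fun_prop) 0
      rw [zero_smul, sub_zero] at this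
      exact this.mono_left nhdsWithin_le_nhds
    obtain ⟨ε, hε1, hε2⟩ := ((hlim.eventually (hKo.mem_nhds hxK)).and
      (self_mem_nhdsWithin (s := Set.Ioi (0:ℝ)))).exists
    exact face_extend hF hxF hy hε2 (hSe ▸ subset_closure hε1)
end

section
/- Let S be a closed convex subset of ℝ^n and F a face of S. Then F is exposed if and only if for every x ∈ S \ F there exists a nonzero affine-linear function ℓ on ℝ^n such that ℓ ≥ 0 on S, ℓ = 0 on F, and ℓ(x) > 0. -/
open MvPolynomial

/-- Evaluation at `x` as a linear functional of the coefficients. -/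
def evalLin {n : ℕ} (x : Fin n → ℝ) : ((Fin n → ℝ) × ℝ) →ₗ[ℝ] ℝ where
  toFun p := affEval p.1 p.2 x
  map_add' p q := by
    simp only [affEval, Prod.fst_add, Prod.snd_add, Pi.add_apply, add_mul, Finset.sum_add_distrib]
    ring
  map_smul' r p := by
    simp only [affEval, Prod.smul_fst, Prod.smul_snd, Pi.smul_apply, smul_eq_mul, mul_assoc,
      ← Finset.mul_sum, RingHom.id_apply]
    ring

/-- For a closed convex `S ⊆ ℝⁿ`, a face `F` of `S` is exposed iff for
every `x ∈ S \ F` there is a nonzero affine-linear `ℓ` with `ℓ ≥ 0` on `S`, `ℓ = 0` on `F`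
and `ℓ(x) > 0`. -/
theorem exposed_iff_separating_hyperplanes {n : ℕ} (S : Set (Fin n → ℝ))
    (hclosed : IsClosed S) (hconv : Convex ℝ S)
    (F : Set (Fin n → ℝ)) (hF : IsFaceOf S F) :
    IsExposedFaceOf S F ↔
      ∀ x ∈ S \ F, ∃ (a : Fin n → ℝ) (c : ℝ), affEval a c ≠ 0 ∧
        (∀ y ∈ S, 0 ≤ affEval a c y) ∧ (∀ y ∈ F, affEval a c y = 0) ∧
        0 < affEval a c x := by
  obtain ⟨hne, -, hFS, -⟩ := hF
  constructor
  · rintro (rfl | ⟨a, c, h0, hpos, -, hEq⟩) x ⟨hxS, hxF⟩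
    · exact absurd hxS hxF
    · refine ⟨a, c, h0, hpos, fun y hy => ?_, ?_⟩
      · rw [← hEq] at hy
        exact hy.1
      · refine lt_of_le_of_ne (hpos x hxS) fun h => hxF ?_
        rw [← hEq]
        exact ⟨h.symm, hxS⟩
  · intro H
    by_cases hFeq : F = S
    · exact Or.inl hFeq
    right
    obtain ⟨x₀, hx₀S, hx₀F⟩ : ∃ x ∈ S, x ∉ F := by
      by_contra! h
      exact hFeq (Set.Subset.antisymm hFS h)
    let C : Set ((Fin n → ℝ) × ℝ) :=
      {p | (∀ y ∈ S, 0 ≤ evalLin y p) ∧ ∀ y ∈ F, evalLin y p = 0}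
    obtain ⟨T, hTC, hspan⟩ := (Submodule.fg_span_iff_fg_span_finset_subset C).1
      (IsNoetherian.noetherian (Submodule.span ℝ C))
    have hval : ∀ y, affEval (∑ p ∈ T, p).1 (∑ p ∈ T, p).2 y = ∑ p ∈ T, evalLin y p :=
      fun y => map_sum (evalLin y) (fun p => p) T
    have hzero : ∀ y ∈ S, ∑ p ∈ T, evalLin y p = 0 → y ∈ F := by
      intro y hy h
      by_contra hyF
      obtain ⟨a, c, -, hpos, hz, hlt⟩ := H y ⟨hy, hyF⟩
      rw [Finset.sum_eq_zero_iff_of_nonneg (fun p hp => (hTC hp).1 y hy)] at h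
      have hle : Submodule.span ℝ C ≤ LinearMap.ker (evalLin y) := by
        rw [hspan, Submodule.span_le]
        exact fun p hp => h p hp
      have hac : (a, c) ∈ C := ⟨hpos, hz⟩
      have h1 : affEval a c y = 0 := hle (Submodule.subset_span hac)
      exact hlt.ne' h1
    have hF0 : ∀ y ∈ F, ∑ p ∈ T, evalLin y p = 0 := fun y hy =>
      Finset.sum_eq_zero fun p hp => (hTC hp).2 y hy
    refine ⟨(∑ p ∈ T, p).1, (∑ p ∈ T, p).2, fun h => hx₀F (hzero x₀ hx₀S ?_), ?_, ?_, ?_⟩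
    · rw [← hval, h]
      rfl
    · intro y hy
      rw [hval]
      exact Finset.sum_nonneg fun p hp => (hTC hp).1 y hy
    · obtain ⟨y, hy⟩ := hne
      exact ⟨y, (hval y).trans (hF0 y hy), hFS hy⟩
    · ext y
      exact ⟨fun h => hzero y h.2 ((hval y).symm.trans h.1),
        fun hy => ⟨(hval y).trans (hF0 y hy), hFS hy⟩⟩
end

section
/- Let S be a closed convex subset of ℝ^n with non-empty interior and F a face of S. Then F is exposed if and only if for every affine-linear subspace U of ℝ^n with F ⊆ U, dim(U) = dim(F) + 2 and U ∩ interior(S) ≠ ∅, the set F ∩ U is an exposed face of S ∩ U (as a subset of the affine space U). -/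
open MvPolynomial

/-- `F` is an exposed face of `S` inside the affine subspace `U` (both `S` and `F` being
subsets of `U`): either `F = S`, or `F` is cut out of `S` by an affine-linear function
that is not identically zero on `U` and nonnegative on `S`. -/
def IsExposedFaceIn {n : ℕ} (U : AffineSubspace ℝ (Fin n → ℝ))
    (S F : Set (Fin n → ℝ)) : Prop :=
  F = S ∨ ∃ (a : Fin n → ℝ) (c : ℝ), (∃ x ∈ (U : Set (Fin n → ℝ)), affEval a c x ≠ 0) ∧
    (∀ x ∈ S, 0 ≤ affEval a c x) ∧
    ({x | affEval a c x = 0} ∩ S).Nonempty ∧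
    {x | affEval a c x = 0} ∩ S = F

lemma aff_to_lin {n : ℕ} (a : Fin n → ℝ) :
    ∃ f : (Fin n → ℝ) →L[ℝ] ℝ, ∀ c x, affEval a c x = c + f x := by
  refine ⟨∑ i, a i • ContinuousLinearMap.proj (R := ℝ) (φ := fun _ : Fin n => ℝ) i, ?_⟩
  intro c x
  simp [affEval]

lemma lin_to_aff {n : ℕ} (f : (Fin n → ℝ) →L[ℝ] ℝ) :
    ∃ a : Fin n → ℝ, ∀ c x, affEval a c x = c + f x := by
  refine ⟨fun i => f (Pi.single i 1), ?_⟩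
  intro c x
  have h := LinearMap.pi_apply_eq_sum_univ (f : (Fin n → ℝ) →ₗ[ℝ] ℝ) x
  have h2 : f x = ∑ i, x i * f (Pi.single i 1) := by
    simp only [ContinuousLinearMap.coe_coe, smul_eq_mul] at h
    rw [h]
    refine Finset.sum_congr rfl fun i _ => ?_
    congr 2
    ext j
    simp [Pi.single_apply, eq_comm]
  simp only [affEval, h2]
  congr 1
  exact Finset.sum_congr rfl fun i _ => mul_comm _ _

/-- Points of `S` that can be prolonged through a point of the face lie in the face. -/
lemma face_ext {n : ℕ} {S F : Set (Fin n → ℝ)} (hF : IsFaceOf S F) {p x : Fin n → ℝ}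
    (hp : p ∈ F) (hx : x ∈ S) (h : ∀ᶠ t in nhds (0 : ℝ), AffineMap.lineMap p x t ∈ S) :
    x ∈ F := by
  obtain ⟨e, he, hball⟩ := Metric.eventually_nhds_iff.1 h
  have h1 : AffineMap.lineMap p x (-(e / 2)) ∈ S := by
    apply hball
    rw [Real.dist_eq, sub_zero, abs_neg, abs_of_pos (by linarith)]
    linarith
  have hd : (0 : ℝ) < 1 + e / 2 := by linarith
  have hd' : (1 + e / 2 : ℝ) ≠ 0 := hd.ne'
  refine (hF.2.2.2 x hx _ h1 ((e / 2) / (1 + e / 2)) (by positivity) ?_ ?_).1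
  · rw [div_lt_one hd]; linarith
  · convert hp using 1
    ext i
    simp only [AffineMap.lineMap_apply_module, Pi.add_apply, Pi.smul_apply, smul_eq_mul]
    field_simp
    ring

lemma face_eq_of_interior {n : ℕ} {S F : Set (Fin n → ℝ)} (hF : IsFaceOf S F)
    {p : Fin n → ℝ} (hp : p ∈ F) (hpi : p ∈ interior S) : F = S := by
  refine Set.Subset.antisymm hF.2.2.1 fun x hx => face_ext hF hp hx ?_
  have hc : Continuous fun t : ℝ => (AffineMap.lineMap p x t : Fin n → ℝ) :=
    AffineMap.lineMap_continuous
  have := hc.continuousAt (x := 0)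
  apply this
  simpa using mem_interior_iff_mem_nhds.1 hpi

lemma face_span {n : ℕ} {S F : Set (Fin n → ℝ)} (hF : IsFaceOf S F)
    {x : Fin n → ℝ} (hx : x ∈ S) (hxs : x ∈ affineSpan ℝ F) : x ∈ F := by
  obtain ⟨p, hp⟩ := Set.Nonempty.intrinsicInterior hF.2.1 hF.1
  obtain ⟨q, hq, rfl⟩ := mem_intrinsicInterior.1 hp
  have hqF : (q : Fin n → ℝ) ∈ F := by
    have h := interior_subset hq
    exact h
  refine face_ext hF hqF hx ?_
  let φ : ℝ → affineSpan ℝ F := fun t =>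
    ⟨AffineMap.lineMap (q : Fin n → ℝ) x t, AffineMap.lineMap_mem t q.2 hxs⟩
  have hc : Continuous φ := Continuous.subtype_mk AffineMap.lineMap_continuous _
  have h0 : φ 0 = q := Subtype.ext (by simp [φ])
  have h1 := hc.continuousAt (x := 0)
  have h2 : ((↑) : affineSpan ℝ F → Fin n → ℝ) ⁻¹' F ∈ nhds (φ 0) := by
    rw [h0]; exact mem_interior_iff_mem_nhds.1 hq
  filter_upwards [h1 h2] with t ht
  exact hF.2.2.1 ht

/-- A linear function, nonnegative around an interior point where it vanishes, is zero. -/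
lemma lin_zero {n : ℕ} {S : Set (Fin n → ℝ)} (f : (Fin n → ℝ) →L[ℝ] ℝ) (c : ℝ)
    {y : Fin n → ℝ} (hy : y ∈ interior S) (U : AffineSubspace ℝ (Fin n → ℝ)) (hyU : y ∈ U)
    (hn : ∀ x ∈ S ∩ U, 0 ≤ c + f x) (h0 : c + f y = 0) (x : Fin n → ℝ) (hx : x ∈ U) :
    c + f x = 0 := by
  have hc : Continuous fun t : ℝ => (AffineMap.lineMap y x t : Fin n → ℝ) :=
    AffineMap.lineMap_continuous
  have h1 : ∀ᶠ t in nhds (0 : ℝ), AffineMap.lineMap y x t ∈ S := by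
    apply hc.continuousAt (x := 0)
    simpa using mem_interior_iff_mem_nhds.1 hy
  obtain ⟨e, he, hball⟩ := Metric.eventually_nhds_iff.1 h1
  have key : ∀ t : ℝ, |t| < e → 0 ≤ t * (c + f x) := by
    intro t ht
    have h2 := hn _ ⟨hball (y := t) (by simpa [Real.dist_eq] using ht),
      AffineMap.lineMap_mem t hyU hx⟩
    rw [AffineMap.lineMap_apply_module, map_add, map_smul, map_smul] at h2
    simp only [smul_eq_mul] at h2
    have : f y = -c := by linarith
    rw [this] at h2
    linarith
  have k1 := key (e / 2) (by rw [abs_of_pos] <;> linarith)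
  have k2 := key (-(e / 2)) (by rw [abs_neg, abs_of_pos] <;> linarith)
  have : e / 2 * (c + f x) = 0 := by linarith
  rcases mul_eq_zero.1 this with h | h
  · linarith
  · exact h

/-- Supporting hyperplane containing a given affine subspace. -/
lemma support_ext {n : ℕ} {S : Set (Fin n → ℝ)} (hclosed : IsClosed S) (hconv : Convex ℝ S)
    (hint : (interior S).Nonempty) (K : AffineSubspace ℝ (Fin n → ℝ))
    (hK : Disjoint (interior S) (K : Set (Fin n → ℝ))) {p : Fin n → ℝ} (hpS : p ∈ S)
    (hpK : p ∈ K) :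
    ∃ g : (Fin n → ℝ) →L[ℝ] ℝ, (∀ x ∈ S, 0 ≤ g (x - p)) ∧ (∀ x ∈ K, g (x - p) = 0) ∧
      ∀ y ∈ interior S, 0 < g (y - p) := by
  obtain ⟨f, u, h1, h2⟩ := geometric_hahn_banach_open hconv.interior isOpen_interior
    K.convex hK
  have hS : ∀ x ∈ S, f x ≤ u := by
    intro x hx
    have hx' : x ∈ closure (interior S) := by
      rw [hconv.closure_interior_eq_closure_of_nonempty_interior hint]
      exact subset_closure hx
    exact closure_minimal (fun z hz => (h1 z hz).le)
      (isClosed_le f.continuous continuous_const) hx'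
  have hpu : f p = u := le_antisymm (hS p hpS) (h2 p hpK)
  refine ⟨-f, ?_, ?_, ?_⟩
  · intro x hx
    have := hS x hx
    simp; linarith
  · intro x hx
    have a1 := h2 x hx
    have a2 := h2 _ (AffineMap.lineMap_mem (-1 : ℝ) hpK hx)
    rw [AffineMap.lineMap_apply_module, map_add, map_smul, map_smul] at a2
    simp only [smul_eq_mul] at a2
    simp; linarith
  · intro y hy
    have := h1 y hy
    simp; linarith

/-- Let `S ⊆ ℝⁿ` be closed convex with non-empty interior and `F` a face
of `S`.  Then `F` is exposed iff for every affine-linear subspace `U` containing `F` with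
`dim U = dim F + 2` and `U ∩ int S ≠ ∅`, the set `F ∩ U` is an exposed face of `S ∩ U`
(as a subset of the affine space `U`). -/
theorem exposed_iff_exposed_in_codim_two_sections {n : ℕ} (S : Set (Fin n → ℝ))
    (hclosed : IsClosed S) (hconv : Convex ℝ S) (hint : (interior S).Nonempty)
    (F : Set (Fin n → ℝ)) (hF : IsFaceOf S F) :
    IsExposedFaceOf S F ↔
      ∀ U : AffineSubspace ℝ (Fin n → ℝ), F ⊆ (U : Set (Fin n → ℝ)) →
        Module.finrank ℝ U.direction
          = Module.finrank ℝ (affineSpan ℝ F).direction + 2 →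
        ((U : Set (Fin n → ℝ)) ∩ interior S).Nonempty →
        (IsFaceOf (S ∩ U) (F ∩ U) ∧ IsExposedFaceIn U (S ∩ U) (F ∩ U)) := by
  constructor
  · intro hE U hFU _ hUi
    have hFU' : F ∩ U = F := Set.inter_eq_left.2 hFU
    refine ⟨?_, ?_⟩
    · rw [hFU']
      refine ⟨hF.1, hF.2.1, Set.subset_inter hF.2.2.1 hFU, ?_⟩
      intro x hx y hy l h0 h1 h
      exact hF.2.2.2 x hx.1 y hy.1 l h0 h1 h
    · rcases hE with rfl | ⟨a, c, hne, hnn, hnon, heq⟩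
      · exact Or.inl rfl
      · right
        refine ⟨a, c, ?_, fun x hx => hnn x hx.1, ?_, ?_⟩
        · obtain ⟨y, hyU, hyi⟩ := hUi
          refine ⟨y, hyU, fun h0 => hne ?_⟩
          obtain ⟨f, hf⟩ := aff_to_lin a
          ext x
          rw [hf]
          refine lin_zero f c hyi ⊤ trivial (fun z hz => ?_) ?_ x trivial
          · rw [← hf]; exact hnn z hz.1
          · rw [← hf]; exact h0
        · rw [← Set.inter_assoc, heq, hFU']; exact hF.1
        · rw [← Set.inter_assoc, heq]
  · intro H
    by_cases hFS : F = S
    · exact Or.inl hFS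
    right
    obtain ⟨p, hp⟩ := hF.1
    have hpS := hF.2.2.1 hp
    obtain ⟨y, hy⟩ := hint
    have hyS := interior_subset hy
    let N : ((Fin n → ℝ) →L[ℝ] ℝ) → Prop := fun f =>
      (∀ x ∈ S, 0 ≤ f (x - p)) ∧ (∀ x ∈ F, f (x - p) = 0) ∧ 0 < f (y - p)
    let W : ((Fin n → ℝ) →L[ℝ] ℝ) → Submodule ℝ (Fin n → ℝ) := fun f =>
      Submodule.span ℝ {v | ∃ x ∈ S, f (x - p) = 0 ∧ v = x - p}
    have hN : ∃ f, N f := by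
      obtain ⟨g, g1, g2, g3⟩ := support_ext hclosed hconv ⟨y, hy⟩ (affineSpan ℝ F) (by
        rw [Set.disjoint_left]
        intro z hz hz'
        exact hFS (face_eq_of_interior hF (face_span hF (interior_subset hz) hz') hz))
        hpS (subset_affineSpan ℝ F hp)
      exact ⟨g, g1, fun x hx => g2 x (subset_affineSpan ℝ F hx), g3 y hy⟩
    obtain ⟨f, hfN, hmin⟩ : ∃ f, N f ∧ ∀ g, N g →
        Module.finrank ℝ (W f) ≤ Module.finrank ℝ (W g) := by
      have := WellFounded.has_min (InvImage.wf (fun g => Module.finrank ℝ (W g))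
        (Nat.lt_wfRel.wf)) {f | N f} hN
      obtain ⟨f, hf, h⟩ := this
      exact ⟨f, hf, fun g hg => not_lt.1 (h g hg)⟩
    have hall : ∀ g, N g → ∀ x ∈ S, f (x - p) = 0 → g (x - p) = 0 := by
      intro g hg x hx hfx
      by_contra hgx
      have hgN : N (f + g) := by
        refine ⟨fun z hz => ?_, fun z hz => ?_, ?_⟩
        · rw [ContinuousLinearMap.add_apply]; exact add_nonneg (hfN.1 z hz) (hg.1 z hz)
        · rw [ContinuousLinearMap.add_apply, hfN.2.1 z hz, hg.2.1 z hz, add_zero]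
        · rw [ContinuousLinearMap.add_apply]; exact add_pos hfN.2.2 hg.2.2
      have hz : ∀ z ∈ S, (f + g) (z - p) = 0 → f (z - p) = 0 ∧ g (z - p) = 0 := by
        intro z hz h
        rw [ContinuousLinearMap.add_apply] at h
        have h1 := hfN.1 z hz
        have h2 := hg.1 z hz
        constructor <;> linarith
      have hlt : W (f + g) < W f := by
        refine lt_of_le_of_ne ?_ ?_
        · apply Submodule.span_mono
          rintro v ⟨z, hzS, hz0, rfl⟩
          exact ⟨z, hzS, (hz z hzS hz0).1, rfl⟩
        · intro he
          have h1 : W (f + g) ≤ LinearMap.ker (g : (Fin n → ℝ) →ₗ[ℝ] ℝ) := by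
            apply Submodule.span_le.2
            rintro v ⟨z, hzS, hz0, rfl⟩
            exact (hz z hzS hz0).2
          have h2 : x - p ∈ W f := Submodule.subset_span ⟨x, hx, hfx, rfl⟩
          rw [← he] at h2
          exact hgx (h1 h2)
      exact absurd (Submodule.finrank_lt_finrank_of_lt hlt) (not_lt.2 (hmin _ hgN))
    have hfin : ∀ x ∈ S, f (x - p) = 0 → x ∈ F := by
      intro x hx hfx
      by_contra hxF
      set L := (affineSpan ℝ F).direction with hL
      have hpL : p ∈ affineSpan ℝ F := subset_affineSpan ℝ F hp
      have hxL : x - p ∉ L := by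
        intro h
        apply hxF
        apply face_span hF hx
        have := AffineSubspace.vadd_mem_of_mem_direction h hpL
        simpa using this
      have hker : L ⊔ Submodule.span ℝ {x - p} ≤
          LinearMap.ker (f : (Fin n → ℝ) →ₗ[ℝ] ℝ) := by
        refine sup_le ?_ ?_
        · rw [hL, direction_affineSpan, vectorSpan_eq_span_vsub_set_right ℝ hp]
          apply Submodule.span_le.2
          rintro v ⟨z, hz, rfl⟩
          exact hfN.2.1 z hz
        · apply Submodule.span_le.2
          rintro v rfl
          exact hfx
      have hyL : y - p ∉ L ⊔ Submodule.span ℝ {x - p} := by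
        intro h
        have := hker h
        exact hfN.2.2.ne' this
      let D := (L ⊔ Submodule.span ℝ {x - p}) ⊔ Submodule.span ℝ {y - p}
      let U := AffineSubspace.mk' p D
      have hmem : ∀ z, z ∈ U ↔ z - p ∈ D := fun z => by
        simp [U, AffineSubspace.mem_mk']
      have hFU : F ⊆ (U : Set (Fin n → ℝ)) := by
        intro z hz
        apply (hmem z).2
        apply Submodule.mem_sup_left
        apply Submodule.mem_sup_left
        exact AffineSubspace.vsub_mem_direction (subset_affineSpan ℝ F hz) hpL
      have hxU : x ∈ U := (hmem x).2 <| Submodule.mem_sup_left <| Submodule.mem_sup_right <|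
        Submodule.mem_span_singleton_self _
      have hyU : y ∈ U := (hmem y).2 <| Submodule.mem_sup_right <|
        Submodule.mem_span_singleton_self _
      have hpU : p ∈ U := hFU hp
      have hdim : Module.finrank ℝ U.direction = Module.finrank ℝ L + 2 := by
        rw [AffineSubspace.direction_mk', Submodule.finrank_sup_span_singleton hyL,
          Submodule.finrank_sup_span_singleton hxL]
      have hFU' : F ∩ U = F := Set.inter_eq_left.2 hFU
      obtain ⟨-, hex⟩ := H U hFU hdim ⟨y, hyU, hy⟩
      rw [hFU'] at hex
      rcases hex with he | ⟨a, c, ⟨w, hwU, hw⟩, hnn, -, heq⟩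
      · apply hxF
        rw [he]
        exact ⟨hx, hxU⟩
      obtain ⟨b, hb⟩ := aff_to_lin a
      have hbF : ∀ z ∈ F, c + b z = 0 := by
        intro z hz
        rw [← heq] at hz
        rw [← hb]; exact hz.1
      have hbp := hbF p hp
      have hbi : ∀ z ∈ interior S, z ∈ U → c + b z ≠ 0 := by
        intro z hz hzU h0
        apply hw
        rw [hb]
        exact lin_zero b c hz U hzU (fun z hz => by rw [← hb]; exact hnn z hz) h0 w hwU
      have hby : 0 < c + b y := by
        refine lt_of_le_of_ne ?_ (hbi y hy hyU).symm
        rw [← hb]; exact hnn y ⟨hyS, hyU⟩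
      have hbx : 0 < c + b x := by
        refine lt_of_le_of_ne ?_ ?_
        · rw [← hb]; exact hnn x ⟨hx, hxU⟩
        · intro h
          apply hxF
          rw [← heq]
          refine ⟨?_, hx, hxU⟩
          show affEval a c x = 0
          rw [hb]; exact h.symm
      let K := AffineSubspace.mk' p (D ⊓ LinearMap.ker (b : (Fin n → ℝ) →ₗ[ℝ] ℝ))
      have hK : ∀ z, z ∈ K ↔ z ∈ U ∧ c + b z = 0 := by
        intro z
        have hbc : c = - b p := by linarith
        rw [hmem, hbc]
        simp only [K, AffineSubspace.mem_mk', Submodule.mem_inf, LinearMap.mem_ker, vsub_eq_sub,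
          ContinuousLinearMap.coe_coe, map_sub]
        refine and_congr Iff.rfl ?_
        constructor <;> intro h <;> linarith
      obtain ⟨g, g1, g2, g3⟩ := support_ext hclosed hconv ⟨y, hy⟩ K (by
        rw [Set.disjoint_left]
        intro z hz hz'
        have := (hK z).1 hz'
        exact hbi z hz this.1 this.2) hpS ((hK p).2 ⟨hpU, hbp⟩)
      have hgN : N g := ⟨g1, fun z hz => g2 z ((hK z).2 ⟨hFU hz, hbF z hz⟩), g3 y hy⟩
      have hgx := hall g hgN x hx hfx
      set r := (c + b x) / (c + b y) with hr
      have hrpos : 0 < r := div_pos hbx hby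
      have hzK : x - r • (y - p) ∈ K := by
        refine (hK _).2 ⟨(hmem _).2 ?_, ?_⟩
        · have : x - r • (y - p) - p = (x - p) - r • (y - p) := by abel
          rw [this]
          exact D.sub_mem ((hmem x).1 hxU) (D.smul_mem _ ((hmem y).1 hyU))
        · rw [map_sub, map_smul, map_sub, smul_eq_mul]
          have h1 : b y - b p = c + b y := by linarith
          rw [h1, hr, div_mul_cancel₀ _ hby.ne']
          ring
      have h3 := g2 _ hzK
      have h4 : x - r • (y - p) - p = (x - p) - r • (y - p) := by abel
      rw [h4, map_sub, map_smul, hgx, smul_eq_mul] at h3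
      have := mul_pos hrpos (g3 y hy)
      linarith
    obtain ⟨a, ha⟩ := lin_to_aff f
    have hv : ∀ x, affEval a (- f p) x = f (x - p) := by
      intro x
      rw [ha, map_sub]; ring
    have heq : {x | affEval a (- f p) x = 0} ∩ S = F := by
      ext x
      simp only [Set.mem_inter_iff, Set.mem_setOf_eq, hv]
      exact ⟨fun h => hfin x h.2 h.1, fun h => ⟨hfN.2.1 x h, hF.2.2.1 h⟩⟩
    refine ⟨a, - f p, ?_, ?_, ?_, heq⟩
    · intro h
      have h1 := congrFun h y
      rw [hv] at h1
      exact hfN.2.2.ne' h1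
    · intro x hx
      rw [hv]; exact hfN.1 x hx
    · rw [heq]; exact hF.1
end

section
/- Let S be a convex subset of ℝ^n and U an affine-linear subspace of ℝ^n intersecting the interior of S. If ℓ : ℝ^n → ℝ is an affine-linear function with ℓ ≥ 0 on S ∩ U, then there exists an affine-linear function ℓ' : ℝ^n → ℝ such that ℓ' ≥ 0 on S and ℓ' agrees with ℓ on U. -/
open MvPolynomial

/-- Let `S ⊆ ℝⁿ` be convex and `U` an affine-linear subspace meeting the
interior of `S`.  If `ℓ` is an affine-linear function with `ℓ ≥ 0` on `S ∩ U`, then there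
is an affine-linear function `ℓ'` with `ℓ' ≥ 0` on `S` that agrees with `ℓ` on `U`. -/
theorem extend_separating_functional {n : ℕ} (S : Set (Fin n → ℝ)) (hconv : Convex ℝ S)
    (U : AffineSubspace ℝ (Fin n → ℝ))
    (hU : ((U : Set (Fin n → ℝ)) ∩ interior S).Nonempty)
    (a : Fin n → ℝ) (c : ℝ)
    (h : ∀ x ∈ S ∩ (U : Set (Fin n → ℝ)), 0 ≤ affEval a c x) :
    ∃ (a' : Fin n → ℝ) (c' : ℝ), (∀ x ∈ S, 0 ≤ affEval a' c' x) ∧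
      ∀ x ∈ (U : Set (Fin n → ℝ)), affEval a' c' x = affEval a c x := by
  obtain ⟨u, huU, huS⟩ := hU
  have huS' : u ∈ S := interior_subset huS
  let L0 : (Fin n → ℝ) →ₗ[ℝ] ℝ := ∑ i, a i • LinearMap.proj i
  have hL0 : ∀ x, L0 x = ∑ i, a i * x i := by
    intro x; simp [L0]
  let L : ((Fin n → ℝ) × ℝ) →ₗ[ℝ] ℝ :=
    L0 ∘ₗ LinearMap.fst ℝ _ _ + (c + L0 u) • LinearMap.snd ℝ _ _
  have hL : ∀ y t, L (y, t) = L0 y + (c + L0 u) * t := by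
    intro y t; simp [L]
  let D : Submodule ℝ ((Fin n → ℝ) × ℝ) := U.direction.prod ⊤
  let f : ((Fin n → ℝ) × ℝ) →ₗ.[ℝ] ℝ := ⟨D, L.domRestrict D⟩
  let s : PointedCone ℝ ((Fin n → ℝ) × ℝ) :=
    { carrier := {p | ∃ t : ℝ, 0 ≤ t ∧ ∃ x ∈ S, p = (t • (x - u), t)}
      zero_mem' := ⟨0, le_rfl, u, huS', by simp; rfl⟩
      smul_mem' := by
        rintro ⟨r, hr⟩ p ⟨t, ht, x, hx, rfl⟩
        refine ⟨r * t, mul_nonneg hr ht, x, hx, ?_⟩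
        ext <;> simp [Nonneg.mk_smul, mul_assoc]
      add_mem' := by
        rintro p q ⟨t, ht, x, hx, rfl⟩ ⟨r, hr, y, hy, rfl⟩
        rcases eq_or_lt_of_le (add_nonneg ht hr) with h0 | h0
        · have h1 : t = 0 := by linarith
          have h2 : r = 0 := by linarith
          subst h1 h2
          exact ⟨0, le_rfl, x, hx, by simp⟩
        · refine ⟨t + r, h0.le, (t / (t + r)) • x + (r / (t + r)) • y,
            hconv hx hy (by positivity) (by positivity) (by field_simp), ?_⟩
          ext i
          · simp
            field_simp
            ring
          · simp }
  obtain ⟨g, hg1, hg2⟩ := riesz_extension s f (by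
    rintro ⟨p, hp⟩ ⟨t, ht, x, hx, rfl⟩
    change 0 ≤ L (t • (x - u), t)
    rw [hL]
    rcases eq_or_lt_of_le ht with h0 | h0
    · subst h0; simp
    · have h1 : t • (x - u) ∈ U.direction := hp.1
      have h2 : x - u ∈ U.direction := (Submodule.smul_mem_iff _ h0.ne').1 h1
      have h3 : x ∈ U := (AffineSubspace.vsub_right_mem_direction_iff_mem huU x).1 h2
      have h4 := h x ⟨hx, h3⟩
      rw [affEval, ← hL0] at h4
      have : L0 (t • (x - u)) + (c + L0 u) * t = t * (c + L0 x) := by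
        simp only [map_smul, map_sub, smul_eq_mul]; ring
      rw [this]; positivity) (by
    rintro ⟨y, t⟩
    have hc : Filter.Tendsto (fun e : ℝ => u + e • y) (nhdsWithin 0 (Set.Ioi 0)) (nhds u) := by
      have : Continuous (fun e : ℝ => u + e • y) := by fun_prop
      have h1 := this.tendsto 0
      simp only [zero_smul, add_zero] at h1
      exact h1.mono_left nhdsWithin_le_nhds
    have h1 := hc.eventually (mem_interior_iff_mem_nhds.1 huS)
    obtain ⟨e, he, he0⟩ := (h1.and self_mem_nhdsWithin).exists
    have he0 : 0 < e := he0
    refine ⟨⟨(0, e⁻¹ - t), ⟨U.direction.zero_mem, trivial⟩⟩, e⁻¹, by positivity, _, he, ?_⟩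
    ext i
    · simp [he0.ne']
    · simp)
  have key : ∀ x, affEval (fun i => g (Pi.single i 1, 0)) (g (0, 1) - g (u, 0)) x
      = g (x - u, 1) := by
    intro x
    have h1 : g (x, 0) = ∑ i, g (Pi.single i 1, 0) * x i := by
      have := LinearMap.pi_apply_eq_sum_univ (g ∘ₗ LinearMap.inl ℝ (Fin n → ℝ) ℝ) x
      simp only [LinearMap.comp_apply, LinearMap.inl_apply, smul_eq_mul] at this
      rw [this]
      refine Finset.sum_congr rfl fun i _ => ?_
      rw [mul_comm]
      congr 3
      ext j
      simp [Pi.single_apply, eq_comm]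
    rw [affEval, ← h1]
    have : ((x - u, 1) : (Fin n → ℝ) × ℝ) = (0, 1) - (u, 0) + (x, 0) := by
      ext <;> simp; ring
    rw [this, map_add, map_sub]
  refine ⟨fun i => g (Pi.single i 1, 0), g (0, 1) - g (u, 0), fun x hx => ?_, fun x hx => ?_⟩
  · rw [key]
    exact hg2 _ ⟨1, zero_le_one, x, hx, by simp⟩
  · rw [key]
    have h1 := hg1 ⟨(x - u, 1), ⟨AffineSubspace.vsub_mem_direction hx huU, trivial⟩⟩
    change g (x - u, 1) = L (x - u, 1) at h1
    rw [h1, hL, map_sub, affEval, ← hL0]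
    ring
end

section
/- Every spectrahedron is a basic closed semialgebraic set. More precisely, let A(t) = A_0 + t_1 A_1 + ⋯ + t_n A_n be a linear matrix polynomial of dimension k, and write det(A(t) − s·I_k) = c_0(t) + c_1(t)s + ⋯ + c_{k−1}(t)s^{k−1} + (−1)^k s^k with c_0,…,c_{k−1} ∈ ℝ[t_1,…,t_n]. Then S(A) = S(c_0, −c_1, c_2, …, (−1)^{k−1} c_{k−1}), i.e. A(x) is positive semidefinite if and only if (−1)^i c_i(x) ≥ 0 for all i = 0,…,k−1. -/
open MvPolynomial

/-- The linear matrix polynomial `A(x) = A₀ + x₁A₁ + ⋯ + xₙAₙ` evaluated at `x`. -/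
def matPoly {n k : ℕ} (A0 : Matrix (Fin k) (Fin k) ℝ) (A : Fin n → Matrix (Fin k) (Fin k) ℝ)
    (x : Fin n → ℝ) : Matrix (Fin k) (Fin k) ℝ :=
  A0 + ∑ i, x i • A i

/-- The spectrahedron `S(A) = {x ∈ ℝⁿ | A(x) ⪰ 0}`. -/
def spectrahedron {n k : ℕ} (A0 : Matrix (Fin k) (Fin k) ℝ)
    (A : Fin n → Matrix (Fin k) (Fin k) ℝ) : Set (Fin n → ℝ) :=
  {x | (matPoly A0 A x).PosSemidef}

lemma aux_det {k : ℕ} (M : Matrix (Fin k) (Fin k) ℝ) (hM : M.IsHermitian) :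
    (M.map Polynomial.C - Matrix.scalar (Fin k) (Polynomial.X : Polynomial ℝ)).det
      = ∏ i, (Polynomial.C (hM.eigenvalues i) - Polynomial.X) := by
  have h1 : M.map Polynomial.C - Matrix.scalar (Fin k) (Polynomial.X : Polynomial ℝ)
      = - M.charmatrix := by
    simp [Matrix.charmatrix]
  have h2 := hM.charpoly_eq
  rw [Matrix.charpoly] at h2
  rw [h1, Matrix.det_neg, h2, Fintype.card, ← Finset.prod_const, ← Finset.prod_mul_distrib]
  refine Finset.prod_congr rfl fun i _ => ?_
  simp

lemma aux_coeff {k : ℕ} (l : Fin k → ℝ) (i : ℕ) :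
    (-1 : ℝ) ^ i * (∏ j, (Polynomial.C (l j) - Polynomial.X)).coeff i
      = (∏ j, (Polynomial.X + Polynomial.C (l j))).coeff i := by
  rw [mul_comm, ← Polynomial.comp_C_mul_X_coeff, Polynomial.prod_comp]
  congr 1
  refine Finset.prod_congr rfl fun i _ => ?_
  simp [add_comm]

/-- A spectrahedron is a basic closed set: writing
`det(A(x) - s·I) = c₀(x) + c₁(x)s + ⋯ + c_{k-1}(x)s^{k-1} + (-1)^k s^k`, the matrix `A(x)`
is positive semidefinite iff `(-1)^i cᵢ(x) ≥ 0` for all `i = 0,…,k-1`. -/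
theorem spectrahedron_basic_closed {n k : ℕ}
    (A0 : Matrix (Fin k) (Fin k) ℝ) (A : Fin n → Matrix (Fin k) (Fin k) ℝ)
    (hA0 : A0.IsSymm) (hA : ∀ i, (A i).IsSymm) (x : Fin n → ℝ) :
    (matPoly A0 A x).PosSemidef ↔
      ∀ i < k, 0 ≤ (-1 : ℝ) ^ i *
        (((matPoly A0 A x).map Polynomial.C
            - Matrix.scalar (Fin k) (Polynomial.X : Polynomial ℝ)).det.coeff i) := by
  have hM : (matPoly A0 A x).IsHermitian := by
    rw [Matrix.IsHermitian, Matrix.conjTranspose_eq_transpose_of_trivial, matPoly,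
      Matrix.transpose_add, Matrix.transpose_sum, hA0.eq]
    simp [fun i => (hA i).eq]
  rw [aux_det _ hM, hM.posSemidef_iff_eigenvalues_nonneg]
  simp_rw [aux_coeff]
  generalize hM.eigenvalues = l
  constructor
  · intro h i _
    have key : ∀ s : Finset (Fin k), ∀ i,
        0 ≤ (∏ j ∈ s, (Polynomial.X + Polynomial.C (l j))).coeff i := by
      intro s
      induction s using Finset.induction_on with
      | empty => intro i; simp [Polynomial.coeff_one]; split_ifs <;> norm_num
      | insert a s ha ih =>
        intro i
        rw [Finset.prod_insert ha, add_mul, Polynomial.coeff_add, Polynomial.coeff_C_mul]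
        refine add_nonneg ?_ (mul_nonneg (h a) (ih i))
        cases i with
        | zero => simp
        | succ i => rw [Polynomial.coeff_X_mul]; exact ih i
    exact key _ i
  · intro h j
    by_contra hj
    have hj : l j < 0 := not_le.mp hj
    set q := ∏ j, (Polynomial.X + Polynomial.C (l j)) with hq
    have hmon : q.Monic := Polynomial.monic_prod_of_monic _ _ fun i _ => Polynomial.monic_X_add_C _
    have hdeg : q.natDegree = k := by
      rw [hq, Polynomial.natDegree_prod_of_monic _ _ fun i _ => Polynomial.monic_X_add_C _]
      simp
    have h0 : q.eval (- l j) = 0 := by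
      rw [hq, Polynomial.eval_prod]
      exact Finset.prod_eq_zero (Finset.mem_univ j) (by simp)
    have hk : q.coeff k = 1 := by rw [← hdeg]; exact hmon
    rw [Polynomial.eval_eq_sum_range, hdeg, Finset.sum_range_succ, hk] at h0
    have h1 : 0 ≤ ∑ i ∈ Finset.range k, q.coeff i * (- l j) ^ i :=
      Finset.sum_nonneg fun i hi => mul_nonneg (h i (Finset.mem_range.mp hi))
        (pow_nonneg (by linarith) _)
    have h2 : 0 < (- l j) ^ k := pow_pos (by linarith) _
    linarith
end

section
/- Let p ∈ ℝ[t_1,…,t_n] be an RZ_e-polynomial of degree d with homogenization P(t,u) = u^d · p(t/u), which is hyperbolic with respect to (e,1), and let C ⊆ ℝ^{n+1} be the closed hyperbolicity cone of P with respect to (e,1). Then the rigidly convex set S defined by p (the closure of the connected component of {x ∈ ℝ^n | p(x) > 0} containing e) satisfies S × {1} = C ∩ {(x,u) ∈ ℝ^{n+1} | u = 1}. -/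
open MvPolynomial

/-- The univariate polynomial `s ↦ P(x - s·e)`. -/
noncomputable def lineEvalSub {m : ℕ} (P : MvPolynomial (Fin m) ℝ) (x e : Fin m → ℝ) :
    Polynomial ℝ :=
  MvPolynomial.aeval (fun i => Polynomial.C (x i) - Polynomial.C (e i) * Polynomial.X) P

/-- `P` is hyperbolic with respect to `e`: `P(e) > 0` and for every `x ∈ ℝᵐ` all complex
zeros of the univariate polynomial `s ↦ P(x - s·e)` are real. -/
def IsHyperbolicWrt {m : ℕ} (P : MvPolynomial (Fin m) ℝ) (e : Fin m → ℝ) : Prop :=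
  0 < eval e P ∧
    ∀ x : Fin m → ℝ, ∀ z : ℂ, Polynomial.aeval z (lineEvalSub P x e) = 0 → z.im = 0

/-- The homogenization `P(t,u) = Σ_{i=0}^d p_{d-i}(t)·u^i` of a polynomial `p` of degree
`d` (here `p_j` is the homogeneous component of `p` of degree `j`, and `u` is the last
variable). -/
noncomputable def homog {n : ℕ} (p : MvPolynomial (Fin n) ℝ) (d : ℕ) :
    MvPolynomial (Fin (n + 1)) ℝ :=
  ∑ i ∈ Finset.range (d + 1),
    rename Fin.castSucc (homogeneousComponent i p) * X (Fin.last n) ^ (d - i)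

theorem aux_scale {m d : ℕ} {A : Type*} [CommRing A] [Algebra ℝ A]
    {Q : MvPolynomial (Fin m) ℝ} (hQ : Q.IsHomogeneous d) (c : A) (x : Fin m → A) :
    aeval (fun i => c * x i) Q = c ^ d * aeval x Q := by
  rw [aeval_def, aeval_def, eval₂_eq', eval₂_eq', Finset.mul_sum]
  refine Finset.sum_congr rfl fun k hk => ?_
  have h := hQ.degree_eq_sum_deg_support hk
  have h2 : ∑ i, k i = d := by
    rw [h]
    symm
    apply Finset.sum_subset (Finset.subset_univ _)
    intro i _ hi
    simpa using hi
  simp_rw [mul_pow]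
  rw [Finset.prod_mul_distrib, Finset.prod_pow_eq_pow_sum, h2]
  ring

theorem aux_scale_eval {m d : ℕ}
    {Q : MvPolynomial (Fin m) ℝ} (hQ : Q.IsHomogeneous d) (c : ℝ) (x : Fin m → ℝ) :
    eval (c • x) Q = c ^ d * eval x Q := by
  have := aux_scale hQ c x
  simp at this
  exact this

theorem aux_mono (N : ℕ) : ∀ r : Polynomial ℝ, r.natDegree ≤ N →
    (∀ z : ℂ, Polynomial.aeval z r = 0 → z.im = 0) → 0 < r.eval 0 →
    (∀ t : ℝ, 0 < t → r.eval t ≠ 0) → ∀ t : ℝ, 0 ≤ t → r.eval 0 ≤ r.eval t := by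
  induction N with
  | zero =>
    intro r hr _ _ _ t _
    rw [Polynomial.eq_C_of_natDegree_le_zero hr]
    simp
  | succ N ih =>
    intro r hr hz h0 hpos t ht
    by_cases hd : r.natDegree = 0
    · rw [Polynomial.eq_C_of_natDegree_eq_zero hd]
      simp
    have hdeg : r.degree ≠ 0 := fun h => hd (Polynomial.natDegree_eq_of_degree_eq_some h)
    obtain ⟨z, hzr⟩ := IsAlgClosed.exists_aeval_eq_zero ℂ r hdeg
    have him := hz z hzr
    have hzx : z = ((z.re : ℝ) : ℂ) := by
      apply Complex.ext <;> simp [him]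
    have hroot : r.eval z.re = 0 := by
      rw [hzx] at hzr
      have h2 : Polynomial.aeval (algebraMap ℝ ℂ z.re) r = 0 := hzr
      rw [Polynomial.aeval_algebraMap_apply] at h2
      simpa using h2
    set x := z.re with hx
    obtain ⟨g, hg⟩ := Polynomial.dvd_iff_isRoot.mpr hroot
    have hxneg : x < 0 := by
      rcases lt_trichotomy x 0 with h | h | h
      · exact h
      · rw [h] at hroot; linarith
      · exact absurd hroot (hpos x h)
    have hg0 : g ≠ 0 := by
      rintro rfl
      simp [hg] at h0
    have hev : ∀ s : ℝ, r.eval s = (s - x) * g.eval s := by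
      intro s; rw [hg]; simp
    have hgd : g.natDegree ≤ N := by
      have : r.natDegree = 1 + g.natDegree := by
        rw [hg, Polynomial.natDegree_mul (Polynomial.X_sub_C_ne_zero x) hg0,
          Polynomial.natDegree_X_sub_C]
      omega
    have hgpos : 0 < g.eval 0 := by
      have := hev 0
      rw [this] at h0
      by_contra hc
      push Not at hc
      nlinarith
    have key := ih g hgd (fun w hw => hz w (by rw [hg]; simp [hw])) hgpos
      (fun s hs h => hpos s hs (by rw [hev, h, mul_zero])) t ht
    rw [hev, hev]
    nlinarith

theorem aux_hyp {m d : ℕ} {Q : MvPolynomial (Fin m) ℝ} (hQ : Q.IsHomogeneous d)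
    {a : Fin m → ℝ} (hH : IsHyperbolicWrt Q a) (y : Fin m → ℝ)
    (hy : ∀ t : ℝ, 0 < t → eval (a + t • y) Q ≠ 0) (t : ℝ) (ht : 0 ≤ t) :
    eval a Q ≤ eval (a + t • y) Q := by
  set r : Polynomial ℝ := MvPolynomial.aeval
    (fun i => Polynomial.C (a i) + Polynomial.C (y i) * Polynomial.X) Q with hr
  have hra : ∀ z : ℂ, Polynomial.aeval z r = aeval (fun i => (a i : ℂ) + z * (y i : ℂ)) Q := by
    intro z
    rw [hr, ← AlgHom.comp_apply, MvPolynomial.comp_aeval]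
    congr 2
    ext i
    simp only [map_add, map_sub, map_mul, Polynomial.aeval_C, Polynomial.aeval_X]
    rw [mul_comm]
    rfl
  have hre : ∀ s : ℝ, r.eval s = eval (a + s • y) Q := by
    intro s
    rw [hr, ← Polynomial.coe_aeval_eq_eval, ← AlgHom.coe_toRingHom,
      AlgHom.coe_toRingHom, ← AlgHom.comp_apply, MvPolynomial.comp_aeval,
      ← MvPolynomial.coe_aeval_eq_eval]
    simp only [RingHom.coe_coe]
    congr 2
    ext i
    simp only [map_add, map_sub, map_mul, Polynomial.aeval_C, Polynomial.aeval_X]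
    rw [mul_comm]
    rfl
  have hsub : ∀ z : ℂ, Polynomial.aeval z (lineEvalSub Q y a)
      = aeval (fun i => (y i : ℂ) - z * (a i : ℂ)) Q := by
    intro z
    rw [lineEvalSub, ← AlgHom.comp_apply, MvPolynomial.comp_aeval]
    congr 2
    ext i
    simp only [map_add, map_sub, map_mul, Polynomial.aeval_C, Polynomial.aeval_X]
    rw [mul_comm]
    rfl
  have h := aux_mono r.natDegree r le_rfl ?_ ?_ ?_ t ht
  · rw [hre, hre] at h
    simpa using h
  · intro z hz
    by_cases hz0 : z = 0
    · simp [hz0]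
    have h1 : Polynomial.aeval (-z⁻¹) (lineEvalSub Q y a) = 0 := by
      rw [hra] at hz
      rw [hsub]
      have h2 := aux_scale hQ z⁻¹ (fun i => (a i : ℂ) + z * (y i : ℂ))
      rw [hz, mul_zero] at h2
      rw [← h2]
      congr 2
      ext i
      field_simp
      ring
    have h2 := hH.2 y _ h1
    simp only [Complex.neg_im, Complex.inv_im, neg_eq_zero] at h2
    have h3 : Complex.normSq z ≠ 0 := by simpa using hz0
    rcases div_eq_zero_iff.mp h2 with h4 | h4
    · linarith
    · exact absurd h4 h3
  · rw [hre]; simpa using hH.1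
  · intro s hs
    rw [hre]; exact hy s hs

theorem aux_cone {m d : ℕ} {Q : MvPolynomial (Fin m) ℝ} (hQ : Q.IsHomogeneous d)
    {a : Fin m → ℝ} (hH : IsHyperbolicWrt Q a) {y : Fin m → ℝ}
    (hy : y ∈ closure (connectedComponentIn {y | 0 < eval y Q} a))
    (t : ℝ) (ht : 0 ≤ t) (ht1 : t < 1) : 0 < eval ((1 - t) • a + t • y) Q := by
  have hcont : Continuous fun x : Fin m → ℝ => eval x Q := MvPolynomial.continuous_eval Q
  let M : Set (Fin m → ℝ) := {y | ∀ t : ℝ, 0 ≤ t → eval a Q ≤ eval (a + t • y) Q}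
  let U : Set (Fin m → ℝ) := {y | ∀ t ∈ Set.Icc (0 : ℝ) 1, 0 < eval ((1 - t) • a + t • y) Q}
  have hM : IsClosed M := by
    have : M = ⋂ t : ℝ, ⋂ _ : 0 ≤ t, {y | eval a Q ≤ eval (a + t • y) Q} := by
      ext y; simp [M]
    rw [this]
    refine isClosed_iInter fun t => isClosed_iInter fun _ => isClosed_le continuous_const ?_
    exact hcont.comp (by fun_prop)
  have hU : IsOpen U := by
    rw [isOpen_iff_mem_nhds]
    intro y hy
    apply isCompact_Icc.eventually_forall_of_forall_eventually
      (P := fun y t => 0 < eval ((1 - t) • a + t • y) Q)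
    intro t ht
    have hc : Continuous fun q : (Fin m → ℝ) × ℝ => eval ((1 - q.2) • a + q.2 • q.1) Q :=
      hcont.comp (by fun_prop)
    exact hc.continuousAt.eventually (lt_mem_nhds (hy t ht))
  have hMpos : ∀ y ∈ M, ∀ t : ℝ, 0 ≤ t → t < 1 → 0 < eval ((1 - t) • a + t • y) Q := by
    intro y hy t ht ht1
    have h1 : 0 < 1 - t := by linarith
    have h2 : (1 - t) • a + t • y = (1 - t) • (a + (t / (1 - t)) • y) := by
      rw [smul_add, smul_smul, mul_div_cancel₀ _ h1.ne']
    rw [h2, aux_scale_eval hQ]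
    exact mul_pos (pow_pos h1 d) (hH.1.trans_le (hy _ (by positivity)))
  have hUM : U ⊆ M := by
    intro y hy t ht
    refine aux_hyp hQ hH y (fun s hs => ?_) t ht
    have h1 : 0 < 1 + s := by linarith
    have h2 : a + s • y = (1 + s) • ((1 - s / (1 + s)) • a + (s / (1 + s)) • y) := by
      rw [smul_add, smul_smul, smul_smul, mul_div_cancel₀ _ h1.ne', mul_sub,
        mul_div_cancel₀ _ h1.ne']
      simp
    rw [h2, aux_scale_eval hQ]
    refine (mul_pos (pow_pos h1 d) (hy _ ⟨by positivity, ?_⟩)).ne'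
    rw [div_le_one h1]; linarith
  have haK : a ∈ connectedComponentIn {y | 0 < eval y Q} a :=
    mem_connectedComponentIn hH.1
  have haU : a ∈ U := by
    intro t _
    rw [← add_smul]
    simpa using hH.1
  have hKU : connectedComponentIn {y | 0 < eval y Q} a ⊆ U := by
    refine isPreconnected_connectedComponentIn.subset_left_of_subset_union hU hM.isOpen_compl
      ?_ ?_ ⟨a, haK, haU⟩
    · exact Set.disjoint_left.mpr fun y hy hn => hn (hUM hy)
    · intro y hy
      by_cases hyM : y ∈ M
      · left
        intro t ht
        rcases ht.2.lt_or_eq with h | h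
        · exact hMpos y hyM t ht.1 h
        · have : y ∈ {y | 0 < eval y Q} := connectedComponentIn_subset _ _ hy
          rw [Set.mem_setOf_eq] at this
          simpa [h] using this
      · right; exact hyM
  exact hMpos y (closure_minimal (hKU.trans hUM) hM hy) t ht ht1

theorem aux_homog {n : ℕ} (p : MvPolynomial (Fin n) ℝ) (d : ℕ) :
    (homog p d).IsHomogeneous d := by
  refine IsHomogeneous.sum _ _ _ fun i hi => ?_
  have h1 := ((homogeneousComponent_isHomogeneous i p).rename_isHomogeneous
    (f := Fin.castSucc (n := n))).mul ((isHomogeneous_X ℝ (Fin.last n)).pow (d - i))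
  have h2 : i + 1 * (d - i) = d := by
    have := Finset.mem_range.mp hi
    omega
  rwa [h2] at h1

theorem aux_dehom {n : ℕ} (p : MvPolynomial (Fin n) ℝ) (x : Fin n → ℝ) :
    eval (Fin.snoc x 1 : Fin (n + 1) → ℝ) (homog p p.totalDegree) = eval x p := by
  conv_rhs => rw [← sum_homogeneousComponent p]
  rw [homog, map_sum, map_sum]
  refine Finset.sum_congr rfl fun i _ => ?_
  rw [map_mul, map_pow, eval_X, eval_rename]
  have : (Fin.snoc x 1 : Fin (n + 1) → ℝ) ∘ Fin.castSucc = x := by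
    ext i; simp
  rw [this]
  simp

/-- Let `p` be an RZ_e-polynomial of degree `d` with homogenization `P`,
which is hyperbolic with respect to `(e,1)`, and let `C` be the closed hyperbolicity cone
of `P` with respect to `(e,1)`.  Then the rigidly convex set `S` defined by `p` satisfies
`S × {1} = C ∩ {u = 1}`. -/
theorem rigidlyConvexSet_eq_coneSection {n : ℕ} (p : MvPolynomial (Fin n) ℝ)
    (d : ℕ) (hd : p.totalDegree = d) (e : Fin n → ℝ) (hRZ : IsRZ p e)
    (hhyp : IsHyperbolicWrt (homog p d) (Fin.snoc e 1))
    (S : Set (Fin n → ℝ))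
    (hS : S = closure (connectedComponentIn {x | 0 < eval x p} e))
    (C : Set (Fin (n + 1) → ℝ))
    (hC : C = closure (connectedComponentIn {y | 0 < eval y (homog p d)} (Fin.snoc e 1))) :
    (fun x : Fin n → ℝ => (Fin.snoc x 1 : Fin (n + 1) → ℝ)) '' S
      = C ∩ {y : Fin (n + 1) → ℝ | y (Fin.last n) = 1} := by
  subst hd
  have hsc : Continuous (fun x : Fin n → ℝ => (Fin.snoc x 1 : Fin (n + 1) → ℝ)) := by
    refine continuous_pi fun i => ?_
    refine Fin.lastCases ?_ (fun j => ?_) i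
    · simpa using continuous_const
    · simpa using continuous_apply j
  have hepos : e ∈ {x | 0 < eval x p} := hRZ.1
  apply Set.Subset.antisymm
  · rintro _ ⟨x, hx, rfl⟩
    refine ⟨?_, by simp⟩
    rw [hS] at hx
    rw [hC]
    refine map_mem_closure (f := fun x : Fin n → ℝ => (Fin.snoc x 1 : Fin (n + 1) → ℝ)) hsc hx ?_
    have h1 : IsPreconnected ((fun x : Fin n → ℝ => (Fin.snoc x 1 : Fin (n + 1) → ℝ)) ''
        connectedComponentIn {x | 0 < eval x p} e) :=
      isPreconnected_connectedComponentIn.image _ hsc.continuousOn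
    have h2 := h1.subset_connectedComponentIn (F := {y | 0 < eval y (homog p p.totalDegree)})
      ⟨e, mem_connectedComponentIn hepos, rfl⟩ (by
        rintro _ ⟨w, hw, rfl⟩
        have h3 : w ∈ {x | 0 < eval x p} := connectedComponentIn_subset _ _ hw
        simpa only [Set.mem_setOf_eq, aux_dehom] using h3)
    intro w hw
    exact h2 ⟨w, hw, rfl⟩
  · rintro y ⟨hyC, hy1⟩
    rw [hC] at hyC
    have hyx : (Fin.snoc (fun i => y i.castSucc) 1 : Fin (n + 1) → ℝ) = y := by
      ext i
      refine Fin.lastCases ?_ (fun j => ?_) i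
      · simpa using hy1.symm
      · simp
    set x : Fin n → ℝ := fun i => y i.castSucc with hx
    refine ⟨x, ?_, hyx⟩
    let f : ℝ → (Fin n → ℝ) := fun t => (1 - t) • e + t • x
    have hf : Continuous f := by fun_prop
    have hpos : ∀ t ∈ Set.Ico (0 : ℝ) 1, 0 < eval (f t) p := by
      intro t ht
      have h1 := aux_cone (aux_homog p p.totalDegree) hhyp hyC t ht.1 ht.2
      have h2 : (1 - t) • (Fin.snoc e 1 : Fin (n + 1) → ℝ) + t • y = Fin.snoc (f t) 1 := by
        rw [← hyx]
        ext i
        refine Fin.lastCases ?_ (fun j => ?_) i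
        · simp
        · simp [f]
      rw [h2, aux_dehom] at h1
      exact h1
    have hsub : f '' Set.Ico (0 : ℝ) 1 ⊆ connectedComponentIn {x | 0 < eval x p} e := by
      refine (isPreconnected_Ico.image f hf.continuousOn).subset_connectedComponentIn
        ⟨0, by simp, by simp [f]⟩ ?_
      rintro _ ⟨t, ht, rfl⟩
      exact hpos t ht
    rw [hS]
    have h1 : (1 : ℝ) ∈ closure (Set.Ico (0 : ℝ) 1) := by
      rw [closure_Ico (by norm_num)]; simp
    have h2 := map_mem_closure hf h1 (fun t ht => hsub ⟨t, ht, rfl⟩)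
    simpa [f] using h2
end

section
/- Let P be a homogeneous real polynomial in m variables of degree d ≥ 1 that is hyperbolic with respect to e ∈ ℝ^m \ {0}, and define P^{(1)}(x) = (d/ds) P(x + s·e)|_{s=0} (the directional derivative of P in direction e). Then P^{(1)} is a homogeneous polynomial of degree d−1 that is hyperbolic with respect to e, and the closed hyperbolicity cone of P is contained in the closed hyperbolicity cone of P^{(1)}. -/
open MvPolynomial

/-- The directional derivative `P⁽¹⁾(x) = (d/ds) P(x + s·e)|_{s=0} = Σᵢ eᵢ·(∂P/∂xᵢ)`. -/
noncomputable def dirDeriv {m : ℕ} (P : MvPolynomial (Fin m) ℝ) (e : Fin m → ℝ) :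
    MvPolynomial (Fin m) ℝ :=
  ∑ i, C (e i) * pderiv i P

namespace HypAux
open Polynomial in
lemma splits_of_real {p : ℝ[X]} (h : ∀ z : ℂ, aeval z p = 0 → z.im = 0) : p.Splits := by
  by_cases hp : p = 0
  · subst hp; exact Polynomial.Splits.zero
  apply Polynomial.Splits.of_splits_map (algebraMap ℝ ℂ) (IsAlgClosed.splits _)
  intro a ha
  have h1 := h a (by
    have := (Polynomial.mem_roots'.1 ha).2
    simpa [Polynomial.IsRoot, Polynomial.aeval_def, Polynomial.eval_map] using this)
  exact ⟨a.re, Complex.ext (by simp) (by simp [h1])⟩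

open Polynomial in
lemma real_of_splits {p : ℝ[X]} (hp : p.Splits) (h0 : p ≠ 0) (z : ℂ) (hz : aeval z p = 0) :
    z.im = 0 := by
  obtain ⟨a, rfl⟩ := Polynomial.Splits.mem_range_of_isRoot (i := algebraMap ℝ ℂ) hp h0
    (x := z) (by simpa [Polynomial.IsRoot, Polynomial.aeval_def, Polynomial.eval_map] using hz)
  simp

open Polynomial in
lemma splits_deriv {p : ℝ[X]} (hp : p.Splits) : (derivative p).Splits := by
  rw [splits_iff_card_roots] at *
  have h1 := Polynomial.card_roots_le_derivative p
  have h2 := Polynomial.natDegree_derivative_le p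
  have h3 := Polynomial.card_roots' (derivative p)
  omega

open Polynomial in
lemma prod_pos (s : Multiset ℝ) (hs : ∀ a ∈ s, a < 0) :
    ∀ k, 0 ≤ ((s.map fun a => Polynomial.X - Polynomial.C a).prod).coeff k ∧
      (k ≤ s.card → 0 < ((s.map fun a => Polynomial.X - Polynomial.C a).prod).coeff k) := by
  induction s using Multiset.induction_on with
  | empty => intro k; simp [Polynomial.coeff_one]; split_ifs <;> simp_all
  | cons a s ih =>
    have ha := hs a (by simp)
    have ih := ih (fun b hb => hs b (by simp [hb]))
    intro k
    simp only [Multiset.map_cons, Multiset.prod_cons, sub_mul, Polynomial.coeff_sub,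
      Polynomial.coeff_C_mul, Multiset.card_cons]
    cases k with
    | zero =>
      have := (ih 0).2 (by simp)
      simp only [Polynomial.coeff_X_mul_zero]
      constructor
      · nlinarith
      · intro _; nlinarith
    | succ k =>
      simp only [Polynomial.coeff_X_mul]
      constructor
      · nlinarith [(ih k).1, (ih (k+1)).1]
      · intro h
        nlinarith [(ih k).2 (by omega), (ih (k+1)).1]

open Polynomial in
lemma coeff_pos {p : ℝ[X]} (hp : p.Splits) (h0 : 0 < p.eval 0)
    (h : ∀ t : ℝ, 0 ≤ t → p.eval t ≠ 0) (k : ℕ) (hk : k ≤ p.natDegree) : 0 < p.coeff k := by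
  have hs : ∀ a ∈ p.roots, a < 0 := by
    intro a ha
    by_contra hc
    exact h a (not_lt.1 hc) (Polynomial.mem_roots'.1 ha).2
  have H := prod_pos p.roots hs
  have e := hp.eq_prod_roots
  have hlc : 0 < p.leadingCoeff := by
    rw [e] at h0
    simp only [Polynomial.eval_mul, Polynomial.eval_C, ← Polynomial.coeff_zero_eq_eval_zero] at h0
    have := (H 0).1
    exact pos_of_mul_pos_left h0 this
  rw [e, Polynomial.coeff_C_mul]
  exact mul_pos hlc ((H k).2 (by rw [← hp.natDegree_eq_card_roots]; exact hk))

noncomputable def line {m : ℕ} (P : MvPolynomial (Fin m) ℝ) (x e : Fin m → ℝ) : Polynomial ℝ :=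
  MvPolynomial.aeval (fun i => Polynomial.C (x i) + Polynomial.C (e i) * Polynomial.X) P

lemma eval_line {m : ℕ} (P : MvPolynomial (Fin m) ℝ) (x e : Fin m → ℝ) (t : ℝ) :
    (line P x e).eval t = eval (x + t • e) P := by
  unfold line
  induction P using MvPolynomial.induction_on with
  | C a => simp
  | add p q hp hq => simp [hp, hq]
  | mul_X p i hp => simp only [map_mul, Polynomial.eval_mul, hp]; simp; left; exact mul_comm _ _

lemma sub_eq {m : ℕ} (P : MvPolynomial (Fin m) ℝ) (x e : Fin m → ℝ) :
    lineEvalSub P x e = line P x (-e) := by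
  unfold line lineEvalSub
  congr 2
  ext1 i
  simp [sub_eq_add_neg]

lemma comp_line {m : ℕ} (P : MvPolynomial (Fin m) ℝ) (x e : Fin m → ℝ) :
    (line P x (-e)).comp (-Polynomial.X) = line P x e := by
  apply Polynomial.funext
  intro t
  simp [eval_line]

lemma dirDeriv_mul_X {m : ℕ} (p : MvPolynomial (Fin m) ℝ) (e : Fin m → ℝ) (i : Fin m) :
    dirDeriv (p * X i) e = dirDeriv p e * X i + p * C (e i) := by
  unfold dirDeriv
  have h : ∀ j, C (e j) * pderiv j (p * X i)
      = C (e j) * pderiv j p * X i + p * (if j = i then C (e i) else 0) := by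
    intro j
    rw [Derivation.leibniz, pderiv_X, Pi.single_apply]
    by_cases hj : j = i
    · subst hj; simp; ring
    · have : ¬ i = j := fun h => hj h.symm
      simp [hj, this]; ring
  simp only [h, Finset.sum_add_distrib, ← Finset.sum_mul, ← Finset.mul_sum]
  simp

lemma deriv_line {m : ℕ} (P : MvPolynomial (Fin m) ℝ) (x e : Fin m → ℝ) :
    Polynomial.derivative (line P x e) = line (dirDeriv P e) x e := by
  induction P using MvPolynomial.induction_on with
  | C a => simp [line, dirDeriv]
  | add p q hp hq =>
    have : dirDeriv (p + q) e = dirDeriv p e + dirDeriv q e := by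
      simp [dirDeriv, mul_add, Finset.sum_add_distrib]
    rw [this]
    unfold line at *
    simp only [map_add, hp, hq]
  | mul_X p i hp =>
    rw [dirDeriv_mul_X]
    unfold line at *
    simp only [map_mul, map_add, Polynomial.derivative_mul, hp]
    simp

lemma cont_coeff {m : ℕ} (P : MvPolynomial (Fin m) ℝ) (e : Fin m → ℝ) (k : ℕ) :
    Continuous fun x => (line P x e).coeff k := by
  unfold line
  induction P using MvPolynomial.induction_on generalizing k with
  | C a => simp only [MvPolynomial.aeval_C]; exact continuous_const
  | add p q hp hq => simp only [map_add, Polynomial.coeff_add]; exact (hp k).add (hq k)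
  | mul_X p i hp =>
    simp only [map_mul, MvPolynomial.aeval_X, mul_add, Polynomial.coeff_add,
      Polynomial.coeff_mul_C, ← mul_assoc]
    cases k with
    | zero => simp only [Polynomial.mul_coeff_zero, Polynomial.coeff_X_zero, mul_zero, add_zero]
              have := hp 0
              fun_prop
    | succ k =>
      simp only [Polynomial.coeff_mul_X, Polynomial.coeff_mul_C]
      have := hp k
      have := hp (k+1)
      fun_prop

open Polynomial in
lemma prod_deg {m : ℕ} (x e : Fin m → ℝ) (u : Fin m → ℕ) (s : Finset (Fin m)) :
    (∏ i ∈ s, (Polynomial.C (x i) + Polynomial.C (e i) * Polynomial.X) ^ u i : ℝ[X]).natDegree ≤ ∑ i ∈ s, u i ∧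
    (∏ i ∈ s, (Polynomial.C (x i) + Polynomial.C (e i) * Polynomial.X) ^ u i : ℝ[X]).coeff (∑ i ∈ s, u i) = ∏ i ∈ s, e i ^ u i := by
  have hl : ∀ i, (Polynomial.C (x i) + Polynomial.C (e i) * Polynomial.X : ℝ[X]).natDegree ≤ 1 := by
    intro i; rw [add_comm]; exact Polynomial.natDegree_linear_le
  have hp : ∀ i, ((Polynomial.C (x i) + Polynomial.C (e i) * Polynomial.X : ℝ[X]) ^ u i).natDegree ≤ u i := by
    intro i; simpa using Polynomial.natDegree_pow_le_of_le (u i) (hl i)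
  have hc : ∀ i, ((Polynomial.C (x i) + Polynomial.C (e i) * Polynomial.X : ℝ[X]) ^ u i).coeff (u i) = e i ^ u i := by
    intro i
    have := Polynomial.coeff_pow_of_natDegree_le (m := u i) (hl i)
    simpa [Polynomial.coeff_C] using this
  induction s using Finset.induction_on with
  | empty => simp
  | insert a s ha ih =>
    simp only [Finset.prod_insert ha, Finset.sum_insert ha]
    refine ⟨Polynomial.natDegree_mul_le_of_le (hp a) ih.1, ?_⟩
    rw [Polynomial.coeff_mul_add_eq_of_natDegree_le (hp a) ih.1, hc, ih.2]

lemma line_deg {m d : ℕ} {P : MvPolynomial (Fin m) ℝ} (h : P.IsHomogeneous d)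
    (x e : Fin m → ℝ) : (line P x e).natDegree ≤ d ∧ (line P x e).coeff d = eval e P := by
  have key : ∀ u ∈ P.support, ∑ i, u i = d := by
    intro u hu
    have := h (MvPolynomial.mem_support_iff.1 hu)
    rw [← this, Finsupp.weight_apply, Finsupp.sum_fintype] <;> simp
  have hl : line P x e = ∑ u ∈ P.support, Polynomial.C (P.coeff u) *
      ∏ i, (Polynomial.C (x i) + Polynomial.C (e i) * Polynomial.X) ^ u i := by
    unfold line
    rw [MvPolynomial.aeval_def, MvPolynomial.eval₂_eq']
    rfl
  rw [hl]
  constructor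
  · apply Polynomial.natDegree_sum_le_of_forall_le
    intro u hu
    refine (Polynomial.natDegree_C_mul_le _ _).trans ?_
    have := (prod_deg x e u Finset.univ).1
    rwa [key u hu] at this
  · rw [Polynomial.finsetSum_coeff, MvPolynomial.eval_eq']
    apply Finset.sum_congr rfl
    intro u hu
    have := (prod_deg x e u Finset.univ).2
    rw [key u hu] at this
    rw [Polynomial.coeff_C_mul, this]

end HypAux

open HypAux

/-- If `P` is homogeneous of degree `d ≥ 1` and hyperbolic with respect
to `e ≠ 0`, then `P⁽¹⁾` is homogeneous of degree `d - 1`, hyperbolic with respect to `e`,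
and the closed hyperbolicity cone of `P` is contained in that of `P⁽¹⁾`. -/
theorem dirDeriv_hyperbolic {m d : ℕ} (P : MvPolynomial (Fin m) ℝ)
    (hd : 1 ≤ d) (hhom : P.IsHomogeneous d) (e : Fin m → ℝ) (he : e ≠ 0)
    (hhyp : IsHyperbolicWrt P e) :
    (dirDeriv P e).IsHomogeneous (d - 1) ∧ IsHyperbolicWrt (dirDeriv P e) e ∧
      closure (connectedComponentIn {x | 0 < eval x P} e)
        ⊆ closure (connectedComponentIn {x | 0 < eval x (dirDeriv P e)} e) := by
  have hQhom : (dirDeriv P e).IsHomogeneous (d - 1) := by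
    unfold dirDeriv
    apply MvPolynomial.IsHomogeneous.sum
    intro i _
    exact (hhom.pderiv).C_mul (e i)
  have hspl : ∀ x, (line P x (-e)).Splits := fun x => splits_of_real (by
    rw [← sub_eq]; exact hhyp.2 x)
  have hspl' : ∀ x, (line P x e).Splits := fun x => by
    rw [← comp_line]; exact (hspl x).comp_neg_X
  have hPe := hhyp.1
  have hQe : 0 < eval e (dirDeriv P e) := by
    have := congrArg (eval e) hhom.sum_X_mul_pderiv
    simp only [map_sum, map_mul, eval_X, map_nsmul] at this
    unfold dirDeriv
    simp only [map_sum, map_mul, eval_C, this]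
    exact nsmul_pos hPe (by omega)
  have hnd : ∀ x, (line P x e).natDegree = d := fun x =>
    le_antisymm (line_deg hhom x e).1 (Polynomial.le_natDegree_of_ne_zero (by
      rw [(line_deg hhom x e).2]; exact hPe.ne'))
  refine ⟨hQhom, ⟨hQe, fun x z hz => ?_⟩, closure_mono ?_⟩
  · have h1 : (line (dirDeriv P e) x e).Splits := by
      rw [← deriv_line]; exact splits_deriv (hspl' x)
    have h0 : line (dirDeriv P e) x e ≠ 0 := by
      intro h
      have := (line_deg hQhom x e).2
      rw [h] at this
      simp at this
      linarith
    have := real_of_splits h1 h0 (-z) (by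
      rw [← comp_line, Polynomial.aeval_comp]
      simpa [sub_eq] using hz)
    simpa using this
  · set K := connectedComponentIn {x | 0 < eval x P} e with hK
    have hKs : K ⊆ {x | 0 < eval x P} := connectedComponentIn_subset _ _
    have heK : e ∈ K := mem_connectedComponentIn hPe
    have hKc : IsPreconnected K := isPreconnected_connectedComponentIn
    let A : Set (Fin m → ℝ) := ⋂ k ∈ Finset.range (d+1), {x | 0 < (line P x e).coeff k}
    let B : Set (Fin m → ℝ) := ⋂ k ∈ Finset.range (d+1), {x | 0 ≤ (line P x e).coeff k}
    have hA : IsOpen A := isOpen_biInter_finset fun k _ =>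
      isOpen_lt continuous_const (cont_coeff P e k)
    have hB : IsClosed B := isClosed_biInter fun k _ =>
      isClosed_le continuous_const (cont_coeff P e k)
    have hAB : A ⊆ B := Set.iInter₂_mono fun k _ x hx => by
      simp only [Set.mem_ofPred_eq] at hx ⊢
      exact hx.le
    have memA : ∀ x, 0 < eval x P → (∀ t : ℝ, 0 ≤ t → eval (x + t • e) P ≠ 0) → x ∈ A := by
      intro x hx ht
      simp only [A, Set.mem_iInter, Finset.mem_range]
      intro k hk
      exact coeff_pos (hspl' x) (by simpa [eval_line] using hx)
        (fun t h => by rw [eval_line]; exact ht t h) k (by rw [hnd]; omega)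
    have heA : e ∈ A := by
      apply memA e hPe
      intro t ht
      have h1 : e + t • e = (1 + t) • e := by rw [add_smul, one_smul]
      have h2 : eval ((1 + t) • e) P = (1 + t) ^ d * eval e P := by
        rw [MvPolynomial.eval_eq', MvPolynomial.eval_eq', Finset.mul_sum]
        apply Finset.sum_congr rfl
        intro u hu
        have key : ∑ i, u i = d := by
          have := hhom (MvPolynomial.mem_support_iff.1 hu)
          rw [← this, Finsupp.weight_apply, Finsupp.sum_fintype] <;> simp
        simp only [Pi.smul_apply, smul_eq_mul, mul_pow, Finset.prod_mul_distrib,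
          Finset.prod_pow_eq_pow_sum, key]
        ring
      rw [h1, h2]
      positivity
    have hKA : K ⊆ A := by
      apply hKc.subset_of_closure_inter_subset hA ⟨e, heK, heA⟩
      rintro x ⟨hx, hxK⟩
      have hxB : x ∈ B := closure_minimal hAB hB hx
      have hx0 : 0 < eval x P := hKs hxK
      apply memA x hx0
      intro t ht
      simp only [B, Set.mem_iInter, Finset.mem_range] at hxB
      rw [← eval_line, Polynomial.eval_eq_sum_range, hnd, Finset.sum_range_succ']
      have h3 : (line P x e).coeff 0 = eval x P := by
        rw [Polynomial.coeff_zero_eq_eval_zero, eval_line]; simp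
      have h4 : 0 ≤ ∑ k ∈ Finset.range d, (line P x e).coeff (k+1) * t ^ (k+1) :=
        Finset.sum_nonneg fun k hk => mul_nonneg (hxB (k+1) (by
          have := Finset.mem_range.1 hk; omega)) (by positivity)
      rw [h3]
      simp only [pow_zero, mul_one]
      linarith
    apply hKc.subset_connectedComponentIn heK
    intro x hx
    have h1 := hKA hx
    simp only [A, Set.mem_iInter, Finset.mem_range] at h1
    have h2 := h1 1 (by omega)
    have h3 : (line P x e).coeff 1 = eval x (dirDeriv P e) := by
      have : (Polynomial.derivative (line P x e)).coeff 0 = eval x (dirDeriv P e) := by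
        rw [deriv_line, Polynomial.coeff_zero_eq_eval_zero, eval_line]; simp
      rw [← this, Polynomial.coeff_derivative]; simp
    simpa [h3] using h2
end

section
/- Let p ∈ ℝ[t_1,…,t_n] be an RZ_0-polynomial of degree d with homogeneous decomposition p = Σ_{i=0}^d p_i, and for k ≥ 0 define p^{(k)}(t) = Σ_{i=k}^d (i!/(i−k)!)·p_{d−i}(t). Then the rigidly convex set S defined by p (the closure of the connected component of {p > 0} containing 0) is the basic closed set S = S(p, p^{(1)}, …, p^{(d−1)}) = {x ∈ ℝ^n | p(x) ≥ 0, p^{(1)}(x) ≥ 0, …, p^{(d−1)}(x) ≥ 0}. -/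
open MvPolynomial

/-- The Renegar derivative `p⁽ᵏ⁾ = Σ_{i=k}^d (i!/(i-k)!)·p_{d-i}` of a polynomial `p` of
degree `d` with homogeneous components `p_j`. -/
noncomputable def renegarDeriv {n : ℕ} (p : MvPolynomial (Fin n) ℝ) (d k : ℕ) :
    MvPolynomial (Fin n) ℝ :=
  ∑ i ∈ Finset.Icc k d, C ((i.descFactorial k : ℕ) : ℝ) * homogeneousComponent (d - i) p

section helpers

lemma rz_prod_nonneg (S : Multiset ℝ) (h : ∀ a ∈ S, 0 ≤ a) (k : ℕ) :
    0 ≤ ((S.map (fun a => (Polynomial.X + Polynomial.C a : Polynomial ℝ))).prod).coeff k := by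
  induction S using Multiset.induction_on generalizing k with
  | empty =>
    simp only [Multiset.map_zero, Multiset.prod_zero, Polynomial.coeff_one]
    split_ifs <;> norm_num
  | cons a S ih =>
    have ih' := ih (fun b hb => h b (Multiset.mem_cons_of_mem hb))
    have ha := h a (Multiset.mem_cons_self a S)
    rw [Multiset.map_cons, Multiset.prod_cons, add_mul, Polynomial.coeff_add,
      Polynomial.coeff_C_mul]
    have h2 := mul_nonneg ha (ih' k)
    cases k with
    | zero => simpa using h2
    | succ k =>
      rw [Polynomial.coeff_X_mul]
      exact add_nonneg (ih' k) h2

lemma rz_prod_pos (S : Multiset ℝ) (h : ∀ a ∈ S, 0 < a) (k : ℕ) (hk : k ≤ S.card) :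
    0 < ((S.map (fun a => (Polynomial.X + Polynomial.C a : Polynomial ℝ))).prod).coeff k := by
  induction S using Multiset.induction_on generalizing k with
  | empty =>
    have : k = 0 := by simpa using hk
    subst this
    simp
  | cons a S ih =>
    have hS : ∀ b ∈ S, 0 < b := fun b hb => h b (Multiset.mem_cons_of_mem hb)
    have ih' := ih hS
    have ha := h a (Multiset.mem_cons_self a S)
    rw [Multiset.map_cons, Multiset.prod_cons, add_mul, Polynomial.coeff_add,
      Polynomial.coeff_C_mul]
    have h2 := mul_nonneg ha.le (rz_prod_nonneg S (fun b hb => (hS b hb).le) k)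
    cases k with
    | zero => simpa using mul_pos ha (ih' 0 (Nat.zero_le _))
    | succ k =>
      rw [Polynomial.coeff_X_mul]
      rw [Multiset.card_cons] at hk
      exact add_pos_of_pos_of_nonneg (ih' k (by omega)) h2

lemma rz_taylor_eq (f : Polynomial ℝ) (hf : f.Splits) :
    Polynomial.taylor 1 f = Polynomial.C f.leadingCoeff *
      ((f.roots.map (fun r => 1 - r)).map
        (fun a => (Polynomial.X + Polynomial.C a : Polynomial ℝ))).prod := by
  conv_lhs => rw [hf.eq_prod_roots]
  rw [Polynomial.taylor_mul, Polynomial.taylor_C, Polynomial.taylor_apply,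
    Polynomial.multiset_prod_comp, Multiset.map_map, Multiset.map_map]
  congr 2
  refine Multiset.map_congr rfl fun r _ => ?_
  simp
  ring

lemma rz_coeff_nonneg (f : Polynomial ℝ) (hf : f.Splits) (hl : 0 < f.leadingCoeff)
    (h : ∀ s, 1 < s → f.eval s ≠ 0) (k : ℕ) : 0 ≤ (Polynomial.taylor 1 f).coeff k := by
  rw [rz_taylor_eq f hf, Polynomial.coeff_C_mul]
  refine mul_nonneg hl.le (rz_prod_nonneg _ ?_ k)
  intro a ha
  obtain ⟨r, hr, rfl⟩ := Multiset.mem_map.1 ha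
  by_contra hc
  exact h r (by linarith) (Polynomial.isRoot_of_mem_roots hr)

lemma rz_coeff_pos (f : Polynomial ℝ) (hf : f.Splits) (hl : 0 < f.leadingCoeff)
    (h : ∀ s, 1 ≤ s → f.eval s ≠ 0) (k : ℕ) (hk : k ≤ f.natDegree) :
    0 < (Polynomial.taylor 1 f).coeff k := by
  rw [rz_taylor_eq f hf, Polynomial.coeff_C_mul]
  refine mul_pos hl (rz_prod_pos _ ?_ k ?_)
  · intro a ha
    obtain ⟨r, hr, rfl⟩ := Multiset.mem_map.1 ha
    by_contra hc
    exact h r (by linarith) (Polynomial.isRoot_of_mem_roots hr)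
  · rw [Multiset.card_map, ← hf.natDegree_eq_card_roots]
    exact hk

lemma rz_eval_pos (f : Polynomial ℝ) (hl : 0 < f.leadingCoeff)
    (h : ∀ k < f.natDegree, 0 ≤ (Polynomial.taylor 1 f).coeff k) (s : ℝ) (hs : 1 < s) :
    0 < f.eval s := by
  rw [← Polynomial.taylor_eval_sub 1, Polynomial.eval_eq_sum_range, Polynomial.natDegree_taylor,
    Finset.sum_range_succ]
  have hs' : 0 < s - 1 := by linarith
  refine add_pos_of_nonneg_of_pos (Finset.sum_nonneg fun i hi => ?_) (mul_pos ?_ (pow_pos hs' _))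
  · exact mul_nonneg (h i (Finset.mem_range.1 hi)) (pow_nonneg hs'.le _)
  · rw [Polynomial.coeff_taylor_natDegree]
    exact hl

variable {n : ℕ}

lemma rz_homog {A : Type*} [CommRing A] [Algebra ℝ A] (φ : MvPolynomial (Fin n) ℝ) (m : ℕ)
    (hφ : φ.IsHomogeneous m) (x : Fin n → ℝ) (z : A) :
    MvPolynomial.aeval (fun i => algebraMap ℝ A (x i) * z) φ
      = algebraMap ℝ A (eval x φ) * z ^ m := by
  rw [MvPolynomial.aeval_def, MvPolynomial.eval₂_eq, MvPolynomial.eval_eq, map_sum,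
    Finset.sum_mul]
  refine Finset.sum_congr rfl fun e he => ?_
  have hm : ∑ i ∈ e.support, e i = m := by
    have := hφ (mem_support_iff.1 he)
    rw [Finsupp.weight_apply, Finsupp.sum] at this
    simpa using this
  simp only [mul_pow, Finset.prod_mul_distrib, Finset.prod_pow_eq_pow_sum, hm, map_mul, map_prod,
    map_pow]
  ring

/-- The homogenization in the extra variable. -/
noncomputable def rzf (p : MvPolynomial (Fin n) ℝ) (d : ℕ) (x : Fin n → ℝ) : Polynomial ℝ :=
  ∑ i ∈ Finset.range (d + 1), Polynomial.monomial i (eval x (homogeneousComponent (d - i) p))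

lemma rzf_coeff (p : MvPolynomial (Fin n) ℝ) (d : ℕ) (x : Fin n → ℝ) (k : ℕ) :
    eval x (renegarDeriv p d k) = (k.factorial : ℝ) * (Polynomial.taylor 1 (rzf p d x)).coeff k := by
  rw [Polynomial.taylor_coeff, rzf, renegarDeriv, map_sum, map_sum, Polynomial.eval_finsetSum,
    Finset.mul_sum]
  have : Finset.Icc k d ⊆ Finset.range (d + 1) := by
    intro i hi
    simp at hi ⊢
    omega
  rw [← Finset.sum_subset this]
  · refine Finset.sum_congr rfl fun i _ => ?_
    rw [Polynomial.hasseDeriv_monomial, Polynomial.eval_monomial,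
      Nat.descFactorial_eq_factorial_mul_choose]
    simp
    ring
  · intro i hi hi'
    have : i < k := by
      simp at hi hi'
      by_contra hc
      have := hi' (by omega)
      omega
    rw [Polynomial.hasseDeriv_monomial, Nat.choose_eq_zero_of_lt this]
    simp

lemma rzf_eval {A : Type*} [Field A] [Algebra ℝ A] (p : MvPolynomial (Fin n) ℝ) (d : ℕ)
    (hd : p.totalDegree = d) (x : Fin n → ℝ) (z : A) (hz : z ≠ 0) :
    Polynomial.aeval z (rzf p d x)
      = z ^ d * MvPolynomial.aeval (fun i => algebraMap ℝ A (x i) * z⁻¹) p := by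
  conv_rhs => rw [← MvPolynomial.sum_homogeneousComponent p, hd, map_sum]
  rw [← Finset.sum_range_reflect, rzf, map_sum, Finset.mul_sum]
  refine Finset.sum_congr rfl fun i hi => ?_
  rw [rz_homog _ _ (homogeneousComponent_isHomogeneous _ _), Polynomial.aeval_monomial]
  have hi' : i ≤ d := by
    simp at hi
    omega
  have e : d + 1 - 1 - i = d - i := by omega
  rw [e]
  have : z ^ d = z ^ i * z ^ (d - i) := by rw [← pow_add]; congr 1; omega
  rw [this, inv_pow]
  have hz2 : z ^ (d - i) ≠ 0 := pow_ne_zero _ hz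
  field_simp

lemma rzf_eval_real (p : MvPolynomial (Fin n) ℝ) (d : ℕ)
    (hd : p.totalDegree = d) (x : Fin n → ℝ) (s : ℝ) (hs : s ≠ 0) :
    (rzf p d x).eval s = s ^ d * eval (s⁻¹ • x) p := by
  have := rzf_eval p d hd x s hs
  rw [Polynomial.coe_aeval_eq_eval] at this
  rw [this, MvPolynomial.aeval_eq_eval]
  have e : (fun i => algebraMap ℝ ℝ (x i) * s⁻¹) = s⁻¹ • x := by
    ext i
    simp [mul_comm]
  rw [e]

lemma rzf_coeff_d (p : MvPolynomial (Fin n) ℝ) (d : ℕ) (x : Fin n → ℝ) :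
    (rzf p d x).coeff d = eval 0 p := by
  rw [rzf, Polynomial.finsetSum_coeff, Finset.sum_eq_single d]
  · simp [MvPolynomial.homogeneousComponent_zero, MvPolynomial.constantCoeff_eq]
  · intro i _ hi
    rw [Polynomial.coeff_monomial, if_neg hi]
  · simp

lemma rzf_natDegree (p : MvPolynomial (Fin n) ℝ) (d : ℕ) (x : Fin n → ℝ) (h : 0 < eval 0 p) :
    (rzf p d x).natDegree = d := by
  apply le_antisymm
  · refine Polynomial.natDegree_sum_le_of_forall_le _ _ fun i hi => ?_
    refine (Polynomial.natDegree_monomial_le _).trans ?_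
    simp at hi
    omega
  · apply Polynomial.le_natDegree_of_ne_zero
    rw [rzf_coeff_d]
    exact h.ne'

lemma rzf_lead (p : MvPolynomial (Fin n) ℝ) (d : ℕ) (x : Fin n → ℝ) (h : 0 < eval 0 p) :
    0 < (rzf p d x).leadingCoeff := by
  rw [Polynomial.leadingCoeff, rzf_natDegree p d x h, rzf_coeff_d]
  exact h

lemma rzf_splits (p : MvPolynomial (Fin n) ℝ) (d : ℕ) (hd : p.totalDegree = d) (hRZ : IsRZ p 0)
    (x : Fin n → ℝ) : (rzf p d x).Splits := by
  refine Polynomial.Splits.of_splits_map (algebraMap ℝ ℂ) (IsAlgClosed.splits _) fun z hz => ?_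
  have hz' : Polynomial.aeval z (rzf p d x) = 0 := by
    have := Polynomial.isRoot_of_mem_roots hz
    rwa [Polynomial.IsRoot, Polynomial.eval_map_algebraMap] at this
  have him : z.im = 0 := by
    by_cases hz0 : z = 0
    · simp [hz0]
    rw [rzf_eval p d hd x z hz0] at hz'
    have h1 := (mul_eq_zero.1 hz').resolve_left (pow_ne_zero _ hz0)
    by_cases hx : x = 0
    · exfalso
      subst hx
      have e : (fun i => algebraMap ℝ ℂ ((0 : Fin n → ℝ) i) * z⁻¹) =
          (algebraMap ℝ ℂ) ∘ (0 : Fin n → ℝ) := by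
        ext i
        simp
      rw [e, MvPolynomial.aeval_algebraMap_apply] at h1
      have h3 := hRZ.1
      rw [MvPolynomial.aeval_eq_eval] at h1
      have : eval (0 : Fin n → ℝ) p = 0 := by simpa using h1
      linarith
    · have h2 := hRZ.2 x hx z⁻¹ (by
        rw [← h1, lineEvalAdd, ← AlgHom.comp_apply, MvPolynomial.comp_aeval]
        congr 2
        ext i
        simp)
      have h3 : (starRingEnd ℂ) z⁻¹ = z⁻¹ := Complex.conj_eq_iff_im.2 h2
      rw [map_inv₀] at h3
      exact Complex.conj_eq_iff_im.1 (inv_injective h3)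
  exact ⟨z.re, by apply Complex.ext <;> simp [him]⟩

lemma rz_nonneg_iff (p : MvPolynomial (Fin n) ℝ) (d : ℕ) (hd : p.totalDegree = d)
    (hRZ : IsRZ p 0) (x : Fin n → ℝ) :
    (∀ k < d, 0 ≤ eval x (renegarDeriv p d k)) ↔ ∀ s : ℝ, 1 < s → (rzf p d x).eval s ≠ 0 := by
  constructor
  · intro h s hs
    refine (rz_eval_pos _ (rzf_lead p d x hRZ.1) (fun k hk => ?_) s hs).ne'
    rw [rzf_natDegree p d x hRZ.1] at hk
    have := h k hk
    rw [rzf_coeff] at this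
    exact nonneg_of_mul_nonneg_right this (by positivity)
  · intro h k _
    rw [rzf_coeff]
    exact mul_nonneg (by positivity)
      (rz_coeff_nonneg _ (rzf_splits p d hd hRZ x) (rzf_lead p d x hRZ.1) h k)

lemma rz_deriv_zero (p : MvPolynomial (Fin n) ℝ) (d : ℕ) (hd : p.totalDegree = d)
    (x : Fin n → ℝ) : eval x (renegarDeriv p d 0) = eval x p := by
  rw [rzf_coeff, Polynomial.taylor_coeff_zero, rzf_eval_real p d hd x 1 one_ne_zero]
  simp

lemma rz_pos_of (p : MvPolynomial (Fin n) ℝ) (d : ℕ) (hd : p.totalDegree = d)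
    (hRZ : IsRZ p 0) (x : Fin n → ℝ) (h : ∀ s : ℝ, 1 ≤ s → (rzf p d x).eval s ≠ 0) :
    ∀ k ≤ d, 0 < eval x (renegarDeriv p d k) := by
  intro k hk
  rw [rzf_coeff]
  exact mul_pos (by positivity)
    (rz_coeff_pos _ (rzf_splits p d hd hRZ x) (rzf_lead p d x hRZ.1) h k
      (by rwa [rzf_natDegree p d x hRZ.1]))

lemma rz_pos_of_nonneg (p : MvPolynomial (Fin n) ℝ) (d : ℕ) (hd : p.totalDegree = d)
    (hRZ : IsRZ p 0) (x : Fin n → ℝ) (h : ∀ k < d, 0 ≤ eval x (renegarDeriv p d k))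
    (hp : 0 < eval x p) : ∀ k ≤ d, 0 < eval x (renegarDeriv p d k) := by
  refine rz_pos_of p d hd hRZ x fun s hs => ?_
  rcases hs.eq_or_lt with rfl | hs
  · rw [rzf_eval_real p d hd x 1 one_ne_zero]
    simpa using hp.ne'
  · exact (rz_nonneg_iff p d hd hRZ x).1 h s hs

lemma rz_smul (p : MvPolynomial (Fin n) ℝ) (d : ℕ) (hd : p.totalDegree = d)
    (hRZ : IsRZ p 0) (x : Fin n → ℝ) (h : ∀ k < d, 0 ≤ eval x (renegarDeriv p d k))
    (t : ℝ) (ht0 : 0 ≤ t) (ht1 : t < 1) : ∀ k ≤ d, 0 < eval (t • x) (renegarDeriv p d k) := by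
  refine rz_pos_of p d hd hRZ _ fun s hs => ?_
  have hs0 : s ≠ 0 := by linarith
  rw [rzf_eval_real p d hd _ s hs0]
  refine mul_ne_zero (pow_ne_zero _ hs0) ?_
  rcases ht0.eq_or_lt with rfl | ht0
  · simpa using hRZ.1.ne'
  · have h1 : 1 < s / t := by
      rw [lt_div_iff₀ ht0]
      linarith
    have h2 := (rz_nonneg_iff p d hd hRZ x).1 h (s / t) h1
    rw [rzf_eval_real p d hd _ _ (by linarith)] at h2
    have h3 := right_ne_zero_of_mul h2
    rw [smul_smul]
    have : s⁻¹ * t = (s / t)⁻¹ := by field_simp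
    rwa [this]

end helpers

/-- If `p` is an RZ₀-polynomial of degree `d`, then the rigidly convex
set defined by `p` is the basic closed set
`S(p, p⁽¹⁾, …, p⁽ᵈ⁻¹⁾) = {x | p⁽ᵏ⁾(x) ≥ 0 for all k = 0,…,d-1}` (where `p⁽⁰⁾ = p`). -/
theorem rigidlyConvexSet_eq_basicClosed {n : ℕ} (p : MvPolynomial (Fin n) ℝ)
    (d : ℕ) (hd : p.totalDegree = d) (hRZ : IsRZ p 0) :
    closure (connectedComponentIn {x | 0 < eval x p} 0)
      = {x : Fin n → ℝ | ∀ k < d, 0 ≤ eval x (renegarDeriv p d k)} := by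
  set G : Set (Fin n → ℝ) := {x | ∀ k ≤ d, 0 < eval x (renegarDeriv p d k)} with hG
  set R : Set (Fin n → ℝ) := {x | ∀ k < d, 0 ≤ eval x (renegarDeriv p d k)} with hR
  have hcont : ∀ q : MvPolynomial (Fin n) ℝ, Continuous fun x : Fin n → ℝ => eval x q :=
    fun q => MvPolynomial.continuous_eval q
  have hGo : IsOpen G := by
    have : G = ⋂ k ∈ Set.Iic d, {x | 0 < eval x (renegarDeriv p d k)} := by
      ext x
      simp [hG]
    rw [this]
    exact (Set.finite_Iic d).isOpen_biInter fun k _ => isOpen_lt continuous_const (hcont _)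
  have hRc : IsClosed R := by
    have : R = ⋂ k, ⋂ (_ : k < d), {x | 0 ≤ eval x (renegarDeriv p d k)} := by
      ext x
      simp [hR]
    rw [this]
    exact isClosed_iInter fun k => isClosed_iInter fun _ =>
      isClosed_le continuous_const (hcont _)
  have hGR : G ⊆ R := fun x hx k hk => (hx k hk.le).le
  have hGp : ∀ x ∈ G, 0 < eval x p := fun x hx => by
    rw [← rz_deriv_zero p d hd]
    exact hx 0 (Nat.zero_le _)
  have hsm : ∀ x ∈ R, ∀ t : ℝ, 0 ≤ t → t < 1 → t • x ∈ G :=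
    fun x hx t h0 h1 => rz_smul p d hd hRZ x hx t h0 h1
  have h0R : (0 : Fin n → ℝ) ∈ R := by
    refine (rz_nonneg_iff p d hd hRZ 0).2 fun s hs => ?_
    have hs0 : s ≠ 0 := by linarith
    rw [rzf_eval_real p d hd _ s hs0]
    simpa [hs0] using hRZ.1.ne'
  have h0G : (0 : Fin n → ℝ) ∈ G := rz_pos_of_nonneg p d hd hRZ 0 h0R hRZ.1
  have hconn : IsPreconnected G := by
    have hst : StarConvex ℝ (0 : Fin n → ℝ) G := by
      rw [starConvex_zero_iff]
      intro x hx t h0 h1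
      rcases h1.eq_or_lt with rfl | h1
      · simpa using hx
      · exact hsm x (hGR hx) t h0 h1
    exact (hst.isPathConnected h0G).isConnected.isPreconnected
  have hC : connectedComponentIn {x | 0 < eval x p} 0 = G := by
    apply Set.Subset.antisymm
    · refine IsPreconnected.subset_left_of_subset_union hGo hRc.isOpen_compl ?_ ?_ ?_
        isPreconnected_connectedComponentIn
      · exact Set.disjoint_compl_right_iff_subset.2 hGR
      · intro x hx
        by_cases hxR : x ∈ R
        · have hx' : x ∈ {x | 0 < eval x p} := connectedComponentIn_subset _ _ hx
          exact Or.inl (rz_pos_of_nonneg p d hd hRZ x hxR hx')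
        · exact Or.inr hxR
      · exact ⟨0, mem_connectedComponentIn hRZ.1, h0G⟩
    · exact hconn.subset_connectedComponentIn h0G hGp
  rw [hC]
  apply Set.Subset.antisymm
  · exact closure_minimal hGR hRc
  · intro x hx
    have htend : Filter.Tendsto (fun t : ℝ => t • x) (nhdsWithin 1 (Set.Iio 1)) (nhds x) := by
      have : ContinuousAt (fun t : ℝ => t • x) 1 := by fun_prop
      have h := this.tendsto
      rw [one_smul] at h
      exact h.mono_left nhdsWithin_le_nhds
    refine mem_closure_of_tendsto htend ?_
    filter_upwards [Ioo_mem_nhdsLT (zero_lt_one (α := ℝ))] with t ht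
    exact hsm x hx t ht.1.le ht.2
end

section
/- Let S ⊆ ℝ² be the basic closed set S = S(t_2 − t_1³, t_1 + 1, t_2, 1 − t_2) = {(x,y) ∈ ℝ² | y ≥ x³, x ≥ −1, 0 ≤ y ≤ 1}. Then the singleton {(0,0)} is a face of S that is not exposed. -/
open MvPolynomial

/-- In the basic closed set
`S = S(t₂ - t₁³, t₁ + 1, t₂, 1 - t₂) = {(x,y) | y ≥ x³, x ≥ -1, 0 ≤ y ≤ 1} ⊆ ℝ²`, the
origin is a face of `S` that is not exposed. -/
theorem origin_nonexposed_face :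
    IsFaceOf {x : Fin 2 → ℝ | (x 0) ^ 3 ≤ x 1 ∧ -1 ≤ x 0 ∧ 0 ≤ x 1 ∧ x 1 ≤ 1}
        ({0} : Set (Fin 2 → ℝ)) ∧
      ¬ IsExposedFaceOf {x : Fin 2 → ℝ | (x 0) ^ 3 ≤ x 1 ∧ -1 ≤ x 0 ∧ 0 ≤ x 1 ∧ x 1 ≤ 1}
        ({0} : Set (Fin 2 → ℝ)) := by
  have hm : (![-1, 0] : Fin 2 → ℝ) ∈
      {x : Fin 2 → ℝ | (x 0) ^ 3 ≤ x 1 ∧ -1 ≤ x 0 ∧ 0 ≤ x 1 ∧ x 1 ≤ 1} := by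
    simp [Set.mem_setOf_eq]
    norm_num
  have hm0 : (![-1, 0] : Fin 2 → ℝ) ≠ 0 := by
    intro h
    have := congrFun h 0
    simp at this
  constructor
  · refine ⟨Set.singleton_nonempty _, convex_singleton _, ?_, ?_⟩
    · intro x hx
      rw [Set.mem_singleton_iff] at hx
      subst hx
      simp
    · rintro x ⟨hx1, hx2, hx3, hx4⟩ y ⟨hy1, hy2, hy3, hy4⟩ l hl hl1 h
      rw [Set.mem_singleton_iff] at h
      have h0 : l * x 0 + (1 - l) * y 0 = 0 := by simpa using congrFun h 0
      have h1 : l * x 1 + (1 - l) * y 1 = 0 := by simpa using congrFun h 1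
      have hl' : 0 < 1 - l := by linarith
      have a1 := mul_nonneg hl.le hx3
      have a2 := mul_nonneg hl'.le hy3
      have x1 : x 1 = 0 := by
        have : l * x 1 = 0 := by linarith
        simpa [hl.ne'] using this
      have y1 : y 1 = 0 := by
        have : (1 - l) * y 1 = 0 := by linarith
        simpa [hl'.ne'] using this
      have cube : ∀ t : ℝ, t ^ 3 ≤ 0 → t ≤ 0 := by
        intro t ht
        by_contra hc
        have := pow_pos (not_le.mp hc) 3
        linarith
      have x0 := cube (x 0) (by linarith)
      have y0 := cube (y 0) (by linarith)
      have b1 := mul_nonneg hl.le (neg_nonneg.mpr x0)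
      have b2 := mul_nonneg hl'.le (neg_nonneg.mpr y0)
      have x0' : x 0 = 0 := by
        have : l * x 0 = 0 := by linarith
        simpa [hl.ne'] using this
      have y0' : y 0 = 0 := by
        have : (1 - l) * y 0 = 0 := by linarith
        simpa [hl'.ne'] using this
      constructor
      · rw [Set.mem_singleton_iff]
        ext i
        fin_cases i <;> simp [x0', x1]
      · rw [Set.mem_singleton_iff]
        ext i
        fin_cases i <;> simp [y0', y1]
  · rintro (h | ⟨a, c, -, hn, -, h⟩)
    · rw [← h] at hm
      exact hm0 hm
    · have hz : (0 : Fin 2 → ℝ) ∈ ({0} : Set (Fin 2 → ℝ)) := rfl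
      rw [← h] at hz
      have hc : c = 0 := by simpa [affEval] using hz.1
      subst hc
      have h1 : 0 ≤ - a 0 := by simpa [affEval, Fin.sum_univ_two] using hn _ hm
      have h2 : a 0 ≠ 0 := by
        intro h0
        apply hm0
        rw [← Set.mem_singleton_iff, ← h]
        exact ⟨by simp [affEval, Fin.sum_univ_two, h0], hm⟩
      have h3 : a 0 < 0 := lt_of_le_of_ne (by linarith) h2
      have hb := abs_nonneg (a 1)
      have hd : 0 < |a 1| - a 0 := by linarith
      obtain ⟨s, hs⟩ : ∃ s, s = -a 0 / (|a 1| - a 0) := ⟨_, rfl⟩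
      have hs0 : 0 < s := by rw [hs]; exact div_pos (by linarith) hd
      have hs1 : s ≤ 1 := by rw [hs, div_le_one hd]; linarith
      have hse : s * (|a 1| - a 0) = -a 0 := by rw [hs]; field_simp
      have hp := hn ![s, s ^ 3] (by
        refine ⟨by simp, ?_, ?_, ?_⟩
        · simp; linarith
        · simp; positivity
        · simpa using pow_le_one₀ hs0.le hs1)
      have hp' : 0 ≤ a 0 * s + a 1 * s ^ 3 := by
        simpa [affEval, Fin.sum_univ_two] using hp
      have hq : 0 ≤ a 0 + a 1 * s ^ 2 := by
        refine nonneg_of_mul_nonneg_right (a := s) ?_ hs0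
        linarith
      have e1 : a 1 * s ^ 2 ≤ |a 1| * s ^ 2 :=
        mul_le_mul_of_nonneg_right (le_abs_self _) (by positivity)
      have e2 : |a 1| * s ^ 2 ≤ |a 1| * s :=
        mul_le_mul_of_nonneg_left (by nlinarith) hb
      have e3 : s * a 0 < 0 := mul_neg_of_pos_of_neg hs0 h3
      linarith
end

section
/- Let S₂ = S(t_2 − t_1³, t_1, 1 − t_2) = {(x,y) ∈ ℝ² | y ≥ x³, x ≥ 0, y ≤ 1}. Then every affine-linear polynomial ℓ ∈ ℝ[t_1,t_2] with ℓ ≥ 0 on S₂ is contained in QM(t_2 − t_1³, t_1, 1 − t_2)_3, i.e. ℓ = σ_0 + σ_1·(t_2 − t_1³) + σ_2·t_1 + σ_3·(1 − t_2) for sums of squares σ_0, σ_1, σ_2, σ_3 with each summand σ_i·p_i of degree at most 3. -/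
open MvPolynomial

/-- `σ` is a sum of squares of polynomials. -/
def IsSOS {n : ℕ} (σ : MvPolynomial (Fin n) ℝ) : Prop :=
  ∃ (r : ℕ) (f : Fin r → MvPolynomial (Fin n) ℝ), σ = ∑ j, f j ^ 2

/-- The truncated quadratic module
`QM(p)_d = {Σᵢ σᵢ pᵢ | σᵢ sums of squares, deg (σᵢ pᵢ) ≤ d}`, where `p₀ = 1`. -/
def QM {n m : ℕ} (p : Fin m → MvPolynomial (Fin n) ℝ) (d : ℕ) :
    Set (MvPolynomial (Fin n) ℝ) :=
  {q | ∃ σ : Fin (m + 1) → MvPolynomial (Fin n) ℝ,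
    (∀ i, IsSOS (σ i)) ∧
    (∀ i, (σ i * (Fin.cons 1 p : Fin (m + 1) → MvPolynomial (Fin n) ℝ) i).totalDegree ≤ d) ∧
    q = ∑ i, σ i * (Fin.cons 1 p : Fin (m + 1) → MvPolynomial (Fin n) ℝ) i}

lemma aux_affine (l : MvPolynomial (Fin 2) ℝ) (hdeg : l.totalDegree ≤ 1) :
    ∃ a b c : ℝ, l = C a + C b * X 0 + C c * X 1 := by
  refine ⟨coeff 0 l, coeff (Finsupp.single 0 1) l, coeff (Finsupp.single 1 1) l, ?_⟩
  ext m
  have h01 : (Finsupp.single (0 : Fin 2) 1 : Fin 2 →₀ ℕ) ≠ Finsupp.single 1 1 := by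
    intro h
    have := DFunLike.congr_fun h 0
    simp at this
  simp only [coeff_add, coeff_C_mul, coeff_X', coeff_C]
  by_cases h0 : m = 0
  · subst h0; simp
  by_cases h1 : m = Finsupp.single 0 1
  · subst h1; simp [h01.symm, Ne.symm h0]
  by_cases h2 : m = Finsupp.single 1 1
  · subst h2; simp [h01, Ne.symm h0]
  rw [if_neg (Ne.symm h0), if_neg (Ne.symm h1), if_neg (Ne.symm h2)]
  simp only [mul_zero, add_zero]
  apply coeff_eq_zero_of_totalDegree_lt
  refine lt_of_le_of_lt hdeg ?_
  have e : ∑ i ∈ m.support, m i = m 0 + m 1 := by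
    rw [← Fin.sum_univ_two (fun i => m i)]
    apply Finset.sum_subset (Finset.subset_univ _)
    intro x _ hx
    simpa using hx
  rw [e]
  by_contra hlt
  have hc : (m 0 = 0 ∧ m 1 = 0) ∨ (m 0 = 1 ∧ m 1 = 0) ∨ (m 0 = 0 ∧ m 1 = 1) := by omega
  rcases hc with h | h | h
  · apply h0; ext i; fin_cases i <;> simp [h.1, h.2]
  · apply h1; ext i; fin_cases i <;> simp [h.1, h.2]
  · apply h2; ext i; fin_cases i <;> simp [h.1, h.2]

lemma aux_sos (u v s : ℝ) (hu : 0 ≤ u) (hv : 0 ≤ v) :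
    IsSOS (C u + C v * (X 0 - C s) ^ 2 : MvPolynomial (Fin 2) ℝ) := by
  refine ⟨2, ![C (Real.sqrt u), C (Real.sqrt v) * (X 0 - C s)], ?_⟩
  simp [Fin.sum_univ_two, mul_pow, ← C_pow, Real.sq_sqrt hu, Real.sq_sqrt hv]

lemma aux_deg (u v s : ℝ) :
    (C u + C v * (X 0 - C s) ^ 2 : MvPolynomial (Fin 2) ℝ).totalDegree ≤ 2 := by
  have h1 : (X 0 - C s : MvPolynomial (Fin 2) ℝ).totalDegree ≤ 1 :=
    (totalDegree_sub _ _).trans (by simp)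
  have h2 := totalDegree_pow (X 0 - C s : MvPolynomial (Fin 2) ℝ) 2
  have h3 := totalDegree_mul (C v) ((X 0 - C s : MvPolynomial (Fin 2) ℝ) ^ 2)
  refine (totalDegree_add _ _).trans ?_
  simp only [totalDegree_C] at *
  apply max_le <;> omega

lemma aux_cert (k α A B s : ℝ) (hk : 0 ≤ k) (hα : 0 ≤ α) (hA : 0 ≤ A) (hB : 0 ≤ B)
    (hs : 0 ≤ s) :
    (C (k + 2 * A * s ^ 3 + B) + C (α - 3 * A * s ^ 2) * X 0 + C (A - B) * X 1) ∈
      QM (![X 1 - X 0 ^ 3, X 0, 1 - X 1] : Fin 3 → MvPolynomial (Fin 2) ℝ) 3 := by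
  have hd1 : (X 1 - X 0 ^ 3 : MvPolynomial (Fin 2) ℝ).totalDegree ≤ 3 :=
    (totalDegree_sub _ _).trans (by simp)
  have hd3 : (1 - X 1 : MvPolynomial (Fin 2) ℝ).totalDegree ≤ 1 :=
    (totalDegree_sub _ _).trans (by simp)
  refine ⟨![C k + C (2 * s * A) * (X 0 - C s) ^ 2, C A, C α + C A * (X 0 - C s) ^ 2, C B],
    ?_, ?_, ?_⟩
  · intro i
    fin_cases i
    · exact aux_sos _ _ _ hk (by positivity)
    · simpa using aux_sos A 0 0 hA le_rfl
    · exact aux_sos _ _ _ hα hA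
    · simpa using aux_sos B 0 0 hB le_rfl
  · intro i
    fin_cases i
    · have := aux_deg k (2 * s * A) s
      show ((C k + C (2 * s * A) * (X 0 - C s) ^ 2) * 1 : MvPolynomial (Fin 2) ℝ).totalDegree ≤ 3
      rw [mul_one]; omega
    · show (C A * (X 1 - X 0 ^ 3) : MvPolynomial (Fin 2) ℝ).totalDegree ≤ 3
      refine (totalDegree_mul _ _).trans ?_
      rw [totalDegree_C]; omega
    · show ((C α + C A * (X 0 - C s) ^ 2) * X 0 : MvPolynomial (Fin 2) ℝ).totalDegree ≤ 3
      refine (totalDegree_mul _ _).trans ?_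
      have := aux_deg α A s
      rw [totalDegree_X]; omega
    · show (C B * (1 - X 1) : MvPolynomial (Fin 2) ℝ).totalDegree ≤ 3
      refine (totalDegree_mul _ _).trans ?_
      rw [totalDegree_C]; omega
  · rw [Fin.sum_univ_four]
    show _ = (C k + C (2 * s * A) * (X 0 - C s) ^ 2) * 1 + C A * (X 1 - X 0 ^ 3)
      + (C α + C A * (X 0 - C s) ^ 2) * X 0 + C B * (1 - X 1)
    simp only [C_add, C_sub, C_mul, C_pow]
    rw [show (C 2 : MvPolynomial (Fin 2) ℝ) = 2 from rfl,
      show (C 3 : MvPolynomial (Fin 2) ℝ) = 3 from rfl]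
    ring

/-- Every affine-linear polynomial `ℓ` that is nonnegative on
`S₂ = S(t₂ - t₁³, t₁, 1 - t₂) = {(x,y) | y ≥ x³, x ≥ 0, y ≤ 1}` lies in
`QM(t₂ - t₁³, t₁, 1 - t₂)₃`. -/
theorem linear_in_QM_of_cubic_example (l : MvPolynomial (Fin 2) ℝ)
    (hdeg : l.totalDegree ≤ 1)
    (hpos : ∀ x : Fin 2 → ℝ, (x 0) ^ 3 ≤ x 1 → 0 ≤ x 0 → x 1 ≤ 1 → 0 ≤ eval x l) :
    l ∈ QM (![X 1 - X 0 ^ 3, X 0, 1 - X 1] : Fin 3 → MvPolynomial (Fin 2) ℝ) 3 := by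
  obtain ⟨a, b, c, rfl⟩ := aux_affine l hdeg
  have hp : ∀ x y : ℝ, x ^ 3 ≤ y → 0 ≤ x → y ≤ 1 → 0 ≤ a + b * x + c * y := by
    intro x y h1 h2 h3
    simpa using hpos ![x, y] (by simpa using h1) (by simpa using h2) (by simpa using h3)
  have h00 := hp 0 0 (by norm_num) le_rfl (by norm_num)
  have h01 := hp 0 1 (by norm_num) le_rfl le_rfl
  have h11 := hp 1 1 (by norm_num) (by norm_num) le_rfl
  have key : ∀ k α A B s : ℝ, 0 ≤ k → 0 ≤ α → 0 ≤ A → 0 ≤ B → 0 ≤ s →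
      a = k + 2 * A * s ^ 3 + B → b = α - 3 * A * s ^ 2 → c = A - B →
      (C a + C b * X 0 + C c * X 1) ∈
      QM (![X 1 - X 0 ^ 3, X 0, 1 - X 1] : Fin 3 → MvPolynomial (Fin 2) ℝ) 3 := by
    intro k α A B s hk hα hA hB hs ha hb hc
    rw [ha, hb, hc]
    exact aux_cert k α A B s hk hα hA hB hs
  by_cases hb : 0 ≤ b
  · by_cases hc : c ≤ 0
    · apply key (a + c) b 0 (-c) 0 <;> linarith
    · apply key a b c 0 0 <;> linarith
  · by_cases hbc : -b ≤ 3 * c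
    · have hc : 0 < c := by linarith
      have hq : 0 ≤ -b / (3 * c) := div_nonneg (by linarith) (by linarith)
      obtain ⟨s, hs, hs2⟩ : ∃ s : ℝ, 0 ≤ s ∧ s ^ 2 = -b / (3 * c) :=
        ⟨_, Real.sqrt_nonneg _, Real.sq_sqrt hq⟩
      have hbs : b = 0 - 3 * c * s ^ 2 := by
        rw [hs2]; field_simp; ring
      have hs1 : s ≤ 1 := by
        have : s ^ 2 ≤ 1 := by rw [hs2, div_le_one (by linarith)]; exact hbc
        nlinarith
      have ht := hp s (s ^ 3) le_rfl hs (pow_le_one₀ hs hs1)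
      have ht' : a + b * s + c * s ^ 3 = a - 2 * c * s ^ 3 := by rw [hbs]; ring
      apply key (a - 2 * c * s ^ 3) 0 c 0 s <;> linarith
    · apply key (a + b + c) 0 (-b / 3) (-b / 3 - c) 1 <;> linarith
end
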